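/- arXiv:0811.3576 — 11 statements merged into one kernel-verified Lean document; each statement's English description precedes it below -/
import Mathlib

section
/- Let X be an infinite semigroup satisfying properties (1) and (2). Let A be an index set of cardinality at most that of X, and for each α ∈ A let F_α be a nonempty finite subset of X. Then there exist elements x_α ∈ X for α ∈ A such that (i) the mapping x ↦ x·x_α is injective on F_α for every α ∈ A, and (ii) the sets F_α·x_α = {x·x_α | x ∈ F_α} and F_β·x_β are disjoint for all α, β ∈ A with α ≠ β. -/
open Cardinal

universe u v

theorem aux_fin {X : Type u} [Infinite X] (T : Finset X) (B : X → Set X)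
    (h : ∀ t, #(B t) < #X) : #(⋃ t ∈ T, B t : Set X) < #X := by
  classical
  induction T using Finset.induction_on with
  | empty => simp; exact (Cardinal.mk_ne_zero X).bot_lt
  | insert a s ha ih =>
    rw [Finset.set_biUnion_insert]
    exact (mk_union_le _ _).trans_lt (Cardinal.add_lt_of_lt (aleph0_le_mk X) (h a) ih)

theorem aux_small {X I : Type u} [Infinite X] (hI : #I < #X) (S : I → Set X)
    (hS : ∀ i, (S i).Finite) : #(⋃ i, S i : Set X) < #X := by
  rcases finite_or_infinite I with h | h
  · have : (⋃ i, S i).Finite := Set.finite_iUnion hS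
    exact this.lt_aleph0.trans_le (aleph0_le_mk X)
  · refine lt_of_le_of_lt ?_ hI
    refine (mk_iUnion_le_sum_mk).trans ?_
    refine (Cardinal.sum_le_sum _ (fun _ => ℵ₀) (fun i => (hS i).lt_aleph0.le)).trans ?_
    rw [Cardinal.sum_const']
    exact (Cardinal.mul_aleph0_eq (aleph0_le_mk I)).le

/-- Lemma on choosing translating elements for families of finite sets in an infinite
semigroup satisfying properties (1) and (2). -/
theorem stmt0 {X : Type u} [Semigroup X] [Infinite X]
    (h1 : ∀ F : Finset X,
      #{z : X | ∀ x ∈ F, ∀ y ∈ F, x ≠ y → x * z ≠ y * z} = #X)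
    (h2 : ∀ P : Set X, #↥P < #X → ∀ x : X, #{z : X | x * z ∈ P} < #X)
    {A : Type v} (hA : Cardinal.lift.{u} #A ≤ Cardinal.lift.{v} #X) (F : A → Finset X) (hF : ∀ a, (F a).Nonempty) :
    ∃ x : A → X,
      (∀ a : A, Set.InjOn (fun t => t * x a) (F a : Set X)) ∧
      (∀ a b : A, a ≠ b →
        Disjoint ((fun t => t * x a) '' (F a : Set X)) ((fun t => t * x b) '' (F b : Set X))) := by
  classical
  obtain ⟨r, wo, hr⟩ := Cardinal.ord_eq X
  have hseg : ∀ i : X, #{j // r j i} < #X := by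
    intro i
    exact Cardinal.card_typein_lt (r := r) i hr
  obtain ⟨e⟩ := Cardinal.lift_mk_le'.1 hA
  let G : X → Finset X := Function.extend e F (fun _ => ∅)
  have hG : ∀ a, G (e a) = F a := fun a => e.injective.extend_apply F _ a
  have key : ∀ (i : X) (g : X → X), ∃ z, (∀ x ∈ G i, ∀ y ∈ G i, x ≠ y → x * z ≠ y * z) ∧
      ∀ t ∈ G i, ∀ j, r j i → ∀ s ∈ G j, t * z ≠ s * g j := by
    intro i g
    let P : Set X := ⋃ j : {j // r j i}, (fun s => s * g j.1) '' (G j.1 : Set X)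
    have hP : #P < #X := aux_small (hseg i) _ (fun j => (Finset.finite_toSet _).image _)
    have hB := aux_fin (G i) (fun t => {z | t * z ∈ P}) (h2 P hP)
    by_contra hcon
    push Not at hcon
    refine absurd (Cardinal.mk_le_mk_of_subset ?_) (not_le.2 (hB.trans_eq (h1 (G i)).symm))
    intro z hz
    obtain ⟨t, ht, j, hj, s, hs, h⟩ := hcon z hz
    simp only [Set.mem_iUnion]
    exact ⟨t, ht, Set.mem_iUnion.2 ⟨⟨j, hj⟩, s, hs, h.symm⟩⟩
  choose f hf1 hf2 using key
  have wf : WellFounded r := wo.wf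
  let x : X → X := wf.fix (fun i rec => f i (fun j => if h : r j i then rec j h else i))
  have hx : ∀ i, x i = f i (fun j => if r j i then x j else i) := by
    intro i
    have := wf.fix_eq (fun i rec => f i (fun j => if h : r j i then rec j h else i)) i
    simpa [x] using this
  have hlt : ∀ i j, r j i → ∀ t ∈ G i, ∀ s ∈ G j, t * x i ≠ s * x j := by
    intro i j hj t ht s hs
    have := hf2 i (fun j => if r j i then x j else i) t ht j hj s hs
    rw [← hx] at this
    simpa [hj] using this
  refine ⟨fun a => x (e a), ?_, ?_⟩
  · intro a s hs t ht h
    by_contra hne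
    have := hf1 (e a) (fun j => if r j (e a) then x j else e a) s (by rw [hG]; exact hs) t
      (by rw [hG]; exact ht) hne
    rw [← hx] at this
    exact this h
  · intro a b hab
    rw [Set.disjoint_left]
    rintro _ ⟨s, hs, rfl⟩ ⟨t, ht, h⟩
    have hs' : s ∈ G (e a) := by rw [hG]; exact hs
    have ht' : t ∈ G (e b) := by rw [hG]; exact ht
    rcases trichotomous_of r (e a) (e b) with h' | h' | h'
    · exact hlt _ _ h' t ht' s hs' h
    · exact hab (e.injective h')
    · exact hlt _ _ h' s hs' t ht' h.symm
end

section
/- Every infinite semigroup X satisfying properties (1) and (2) is ambitable: there exists a function f : X → [0,1] such that the right orbit {z ↦ f(zx) | x ∈ X} of f is dense in the product space [0,1]^X. -/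
open Cardinal

/-- Every infinite semigroup satisfying properties (1) and (2) is ambitable. -/
theorem stmt1 {X : Type*} [Semigroup X] [Infinite X]
    (h1 : ∀ F : Finset X,
      #{z : X | ∀ x ∈ F, ∀ y ∈ F, x ≠ y → x * z ≠ y * z} = #X)
    (h2 : ∀ P : Set X, #↥P < #X → ∀ x : X, #{z : X | x * z ∈ P} < #X)
    :
    ∃ f : X → Set.Icc (0 : ℝ) 1,
      Dense (Set.range fun x : X => fun z : X => f (z * x)) := by
  classical
  have hX : ℵ₀ ≤ #X := Cardinal.aleph0_le_mk X
  have hcard : #((#X).ord.ToType) = #(Finset X × (X →₀ ℕ)) := by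
    rw [Cardinal.mk_ord_toType, Cardinal.mk_prod, Cardinal.lift_id, Cardinal.lift_id,
      Cardinal.mk_finset_of_infinite, Cardinal.mk_finsupp_lift_of_infinite]
    simp [hX]
  obtain ⟨e⟩ := Cardinal.eq.1 hcard
  have ex : ∀ (i : (#X).ord.ToType) (prev : ∀ j, j < i → X), ∃ z : X,
      (∀ x ∈ (e i).1, ∀ y ∈ (e i).1, x ≠ y → x * z ≠ y * z) ∧
      ∀ j (hj : j < i), ∀ y ∈ (e i).1, ∀ y' ∈ (e j).1, y * z ≠ y' * prev j hj := by
    intro i prev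
    let P : Set X := ⋃ j : Set.Iio i, ((e j.1).1.image (fun y' => y' * prev j.1 j.2) : Finset X)
    have hI : #(Set.Iio i) < #X := Cardinal.mk_Iio_toType_ord_lt i
    have hP : #P < #X := by
      rcases finite_or_infinite (Set.Iio i) with hf | hf
      · have : P.Finite := Set.finite_iUnion fun j => Finset.finite_toSet _
        exact (Cardinal.lt_aleph0_iff_set_finite.2 this).trans_le hX
      · refine lt_of_le_of_lt (Cardinal.mk_iUnion_le _) ?_
        refine lt_of_le_of_lt (mul_le_mul_right (ciSup_le' (a := ℵ₀) fun j => ?_) _) ?_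
        · exact (Cardinal.lt_aleph0_iff_set_finite.2 (Finset.finite_toSet _)).le
        · rw [Cardinal.mul_aleph0_eq (Cardinal.aleph0_le_mk _)]
          exact hI
    have hQ : ∀ F : Finset X, #{z : X | ∃ y ∈ F, y * z ∈ P} < #X := by
      intro F
      induction F using Finset.induction_on with
      | empty => simpa using Cardinal.aleph0_pos.trans_le hX
      | insert a s ha ih =>
        have : {z : X | ∃ y ∈ insert a s, y * z ∈ P} =
            {z | a * z ∈ P} ∪ {z : X | ∃ y ∈ s, y * z ∈ P} := by
          ext z; simp
        rw [this]
        exact (Cardinal.mk_union_le _ _).trans_lt (Cardinal.add_lt_of_lt hX (h2 P hP a) ih)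
    have hn : ¬ {z : X | ∀ x ∈ (e i).1, ∀ y ∈ (e i).1, x ≠ y → x * z ≠ y * z} ⊆
        {z : X | ∃ y ∈ (e i).1, y * z ∈ P} := by
      intro h
      have := (Cardinal.mk_le_mk_of_subset h).trans_lt (hQ _)
      rw [h1] at this
      exact lt_irrefl _ this
    obtain ⟨z, hz, hz'⟩ := Set.not_subset.1 hn
    refine ⟨z, hz, fun j hj y hy y' hy' h => hz' ⟨y, hy, ?_⟩⟩
    refine Set.mem_iUnion.2 ⟨⟨j, hj⟩, ?_⟩
    rw [h]
    exact Finset.mem_coe.2 (Finset.mem_image_of_mem _ hy')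
  have wf : WellFounded (fun a b : (#X).ord.ToType => a < b) := wellFounded_lt
  obtain ⟨x, hx⟩ : ∃ x : (#X).ord.ToType → X, ∀ i,
      (∀ a ∈ (e i).1, ∀ b ∈ (e i).1, a ≠ b → a * x i ≠ b * x i) ∧
      ∀ j, j < i → ∀ y ∈ (e i).1, ∀ y' ∈ (e j).1, y * x i ≠ y' * x j := by
    refine ⟨wf.fix (C := fun _ => X) (fun i prev => (ex i prev).choose), fun i => ?_⟩
    have := (ex i (fun j _ => wf.fix (C := fun _ => X)
      (fun i prev => (ex i prev).choose) j)).choose_spec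
    rw [wf.fix_eq]
    exact this
  let D := TopologicalSpace.denseSeq (Set.Icc (0 : ℝ) 1)
  let f : X → Set.Icc (0 : ℝ) 1 := fun w =>
    if h : ∃ p : (#X).ord.ToType × X, p.2 ∈ (e p.1).1 ∧ w = p.2 * x p.1
    then D ((e h.choose.1).2 h.choose.2) else 0
  have hf : ∀ i, ∀ y ∈ (e i).1, f (y * x i) = D ((e i).2 y) := by
    intro i y hy
    have h : ∃ p : (#X).ord.ToType × X, p.2 ∈ (e p.1).1 ∧ y * x i = p.2 * x p.1 :=
      ⟨(i, y), hy, rfl⟩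
    have hfe : f (y * x i) = D ((e h.choose.1).2 h.choose.2) := dif_pos h
    rw [hfe]
    obtain ⟨hm, he⟩ := h.choose_spec
    generalize h.choose = p at hm he
    obtain ⟨j, y'⟩ := p
    simp only at hm he ⊢
    rcases lt_trichotomy i j with hij | hij | hij
    · exact absurd he.symm ((hx j).2 i hij y' hm y hy)
    · subst hij
      by_cases hyy : y = y'
      · rw [hyy]
      · exact absurd he ((hx i).1 y hy y' hm hyy)
    · exact absurd he ((hx i).2 j hij y hy y' hm)
  refine ⟨f, dense_iff_inter_open.2 ?_⟩
  rintro U hU ⟨u, hu⟩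
  obtain ⟨I, v, hv, hvU⟩ := isOpen_pi_iff.1 hU u hu
  have hd : ∀ a, a ∈ I → ∃ n, D n ∈ v a := fun a ha =>
    (TopologicalSpace.denseRange_denseSeq _).exists_mem_open (hv a ha).1 ⟨_, (hv a ha).2⟩
  choose n hn using hd
  let i := e.symm (I, Finsupp.indicator I n)
  have hi : e i = (I, Finsupp.indicator I n) := e.apply_symm_apply _
  refine ⟨_, hvU ?_, ⟨x i, rfl⟩⟩
  intro a ha
  have ha' : a ∈ I := ha
  have := hf i a (by rw [hi]; exact ha')
  simp only [this, hi]
  rw [Finsupp.indicator_of_mem ha']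
  exact hn a ha'
end

section
/- Every infinite group G (with the discrete uniformity) is ambitable: there exists a function f : G → [0,1] such that the right orbit {z ↦ f(zx) | x ∈ G} of f is dense in the product space [0,1]^G. -/
open Cardinal in
theorem stmt2_aux {G : Type*} [Group G] [Infinite G] {T : Type*} [LinearOrder T]
    [WellFoundedLT T] (hT : ∀ i : T, Cardinal.lift.{u_1} #(Set.Iio i) < Cardinal.lift.{u_2} #G)
    (F : T → Finset G) :
    ∃ x : T → G, ∀ i, ∀ j < i, ∀ a ∈ F i, ∀ b ∈ F j, a * x i ≠ b * x j := by
  have key : ∀ (i : T) (x : ∀ j, j < i → G),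
      ∃ y : G, ∀ j (hj : j < i), ∀ a ∈ F i, ∀ b ∈ F j, a * y ≠ b * x j hj := by
    intro i x
    let S : Set.Iio i → Set G := fun j =>
      (fun p : G × G => p.1⁻¹ * (p.2 * x j.1 j.2)) '' ((F i ×ˢ F j.1 : Finset (G × G)) : Set (G × G))
    have hS : ∀ j, (S j).Finite := fun j => (Finset.finite_toSet _).image _
    have hne : (⋃ j, S j) ≠ Set.univ := by
      rcases finite_or_infinite (Set.Iio i) with h | h
      · intro h2
        exact Set.infinite_univ (h2 ▸ Set.finite_iUnion hS)
      · intro h2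
        have h3 : Cardinal.lift.{u_2} #(⋃ j, S j) ≤ Cardinal.lift.{u_1} #(Set.Iio i) := by
          refine (Cardinal.mk_iUnion_le_lift S).trans ?_
          refine (mul_le_mul_right (c := ℵ₀) ?_ _).trans ?_
          · refine ciSup_le' fun j => ?_
            have := (hS j).countable.le_aleph0
            simpa using this
          · rw [Cardinal.mul_aleph0_eq]
            simp
        rw [h2, Cardinal.mk_univ] at h3
        exact absurd h3 (not_le.2 (hT i))
    obtain ⟨y, hy⟩ := (Set.ne_univ_iff_exists_notMem _).1 hne
    refine ⟨y, fun j hj a ha b hb h => hy ?_⟩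
    refine Set.mem_iUnion.2 ⟨⟨j, hj⟩, (a, b), by simp [ha, hb], ?_⟩
    simp [← h]
  choose c hc using key
  let x : T → G := (wellFounded_lt (α := T)).fix (fun i ih => c i ih)
  have hx : ∀ i, x i = c i (fun j _ => x j) := fun i =>
    (wellFounded_lt (α := T)).fix_eq (fun i ih => c i ih) i
  refine ⟨x, fun i j hj a ha b hb => ?_⟩
  rw [hx i]
  exact hc i (fun j _ => x j) j hj a ha b hb

open Cardinal in
/-- Every infinite (discrete) group is ambitable. -/
theorem stmt2 {G : Type*} [Group G] [Infinite G] :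
    ∃ f : G → Set.Icc (0 : ℝ) 1,
      Dense (Set.range fun x : G => fun z : G => f (z * x)) := by
  classical
  have hcard : #((#G).ord.ToType) = #(Finset G × (G →₀ ℚ)) := by
    simp [Cardinal.mk_finset_of_infinite, Cardinal.mk_finsupp_of_infinite]
  obtain ⟨e⟩ := Cardinal.eq.1 hcard
  obtain ⟨x, hx⟩ := stmt2_aux (G := G) (T := (#G).ord.ToType)
    (fun i => by simpa using Cardinal.mk_Iio_ord_toType i) (fun i => (e i).1)
  have huniq : ∀ i j, ∀ a ∈ (e i).1, ∀ b ∈ (e j).1, a * x i = b * x j → i = j ∧ a = b := by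
    intro i j a ha b hb h
    rcases lt_trichotomy i j with h1 | h1 | h1
    · exact absurd h.symm (hx j i h1 b hb a ha)
    · subst h1
      exact ⟨rfl, mul_right_cancel h⟩
    · exact absurd h (hx i j h1 a ha b hb)
  let P : ℚ → Set.Icc (0 : ℝ) 1 := fun q => Set.projIcc 0 1 zero_le_one (q : ℝ)
  have hP : DenseRange P := by
    have := (Set.projIcc_surjective (zero_le_one (α := ℝ))).denseRange.comp
      (Rat.denseRange_cast (𝕜 := ℝ)) continuous_projIcc
    exact this
  let f : G → Set.Icc (0 : ℝ) 1 := fun y =>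
    if h : ∃ p : (#G).ord.ToType × G, p.2 ∈ (e p.1).1 ∧ y = p.2 * x p.1 then
      P ((e h.choose.1).2 h.choose.2) else 0
  have hf : ∀ i, ∀ a ∈ (e i).1, f (a * x i) = P ((e i).2 a) := by
    intro i a ha
    have h : ∃ p : (#G).ord.ToType × G, p.2 ∈ (e p.1).1 ∧ a * x i = p.2 * x p.1 :=
      ⟨(i, a), ha, rfl⟩
    obtain ⟨h1, h2⟩ := huniq _ _ _ ha _ h.choose_spec.1 h.choose_spec.2
    simp only [f]
    rw [dif_pos h, ← h1, ← h2]
  refine ⟨f, ?_⟩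
  rw [dense_iff_inter_open]
  rintro U hU ⟨p, hp⟩
  obtain ⟨I, u, hu, hsub⟩ := isOpen_pi_iff.1 hU p hp
  have hq : ∀ g, ∃ q : ℚ, g ∈ I → P q ∈ u g := by
    intro g
    by_cases hg : g ∈ I
    · obtain ⟨q, hq⟩ := hP.exists_mem_open (hu g hg).1 ⟨_, (hu g hg).2⟩
      exact ⟨q, fun _ => hq⟩
    · exact ⟨0, fun h => absurd h hg⟩
  choose q hq using hq
  let t := e.symm (I, Finsupp.indicator I (fun g _ => q g))
  have ht : e t = (I, Finsupp.indicator I (fun g _ => q g)) := e.apply_symm_apply _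
  refine ⟨fun z => f (z * x t), hsub ?_, ⟨x t, rfl⟩⟩
  intro g hg
  have hg' : g ∈ I := hg
  change f (g * x t) ∈ u g
  rw [hf t g (by rw [ht]; exact hg'), ht]
  simpa [Finsupp.indicator_of_mem hg'] using hq g hg'
end

section
/- Every infinite semigroup X that is right cancellative (xz = yz implies x = y) and weakly left cancellative (for all x, b ∈ X the set {z ∈ X | xz = b} is finite) satisfies properties (1) and (2), and is therefore ambitable: there exists f : X → [0,1] whose right orbit {z ↦ f(zx) | x ∈ X} is dense in [0,1]^X. -/
open Cardinal

theorem aux_rec {I X : Type*} [Nonempty X] (r : I → I → Prop) (hr : WellFounded r)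
    (R : I → X → I → X → Prop)
    (h : ∀ (t : I) (g : I → X), ∃ x, ∀ s, r s t → R s (g s) t x) :
    ∃ g : I → X, ∀ s t, r s t → R s (g s) t (g t) := by
  classical
  have h' : ∀ (t : I) (g : ∀ s, r s t → X), ∃ x, ∀ s (hs : r s t), R s (g s hs) t x := by
    intro t g
    obtain ⟨x, hx⟩ := h t (fun s => if hs : r s t then g s hs else Classical.arbitrary X)
    refine ⟨x, fun s hs => ?_⟩
    have := hx s hs
    rwa [dif_pos hs] at this
  choose F hF using h'
  refine ⟨hr.fix F, fun s t hst => ?_⟩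
  rw [hr.fix_eq F t]
  exact hF t (fun s _ => hr.fix F s) s hst

universe u in
theorem aux_union {I X : Type u} [Infinite X] (A : I → Set X) (P : Set I)
    (hP : #P < #X) (hA : ∀ i, (A i).Finite) :
    #(⋃ i ∈ P, A i : Set X) < #X := by
  by_cases hf : P.Finite
  · exact (lt_aleph0_iff_set_finite.2 (hf.biUnion fun i _ => hA i)).trans_le (aleph0_le_mk X)
  · have hinf : ℵ₀ ≤ #P := by
      rw [← not_lt, lt_aleph0_iff_set_finite]; exact hf
    have h1 := mk_biUnion_le A P
    have h2 : (⨆ x : P, #(A x.1)) ≤ ℵ₀ := by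
      apply ciSup_le'
      intro i
      exact (lt_aleph0_iff_set_finite.2 (hA i)).le
    refine (h1.trans ?_).trans_lt hP
    refine (mul_le_mul_right h2 _).trans ?_
    rw [mul_eq_left hinf hinf aleph0_ne_zero]

theorem aux_finunion {I X : Type*} [Infinite X] (A : I → Set X) (F : Finset I)
    (hA : ∀ i, #(A i) < #X) : #(⋃ i ∈ F, A i : Set X) < #X := by
  classical
  induction F using Finset.induction_on with
  | empty => simpa only [Finset.notMem_empty, Set.iUnion_of_empty, Set.iUnion_empty, Set.iUnion_false, mk_emptyCollection] using aleph0_pos.trans_le (aleph0_le_mk X)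
  | insert a s ha ih =>
    rw [Finset.set_biUnion_insert]
    exact (mk_union_le _ _).trans_lt (add_lt_of_lt (aleph0_le_mk X) (hA a) ih)

/-- Every infinite right cancellative, weakly left cancellative semigroup satisfies
properties (1) and (2), and is therefore ambitable. -/
theorem stmt3 {X : Type*} [Semigroup X] [Infinite X]
    (hrc : ∀ x y z : X, x * z = y * z → x = y)
    (hwlc : ∀ x b : X, {z : X | x * z = b}.Finite) :
    (∀ F : Finset X,
      #{z : X | ∀ x ∈ F, ∀ y ∈ F, x ≠ y → x * z ≠ y * z} = #X) ∧
    (∀ P : Set X, #↥P < #X → ∀ x : X, #{z : X | x * z ∈ P} < #X) ∧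
    ∃ f : X → Set.Icc (0 : ℝ) 1,
      Dense (Set.range fun x : X => fun z : X => f (z * x)) := by
  have h2 : ∀ P : Set X, #↥P < #X → ∀ x : X, #{z : X | x * z ∈ P} < #X := by
    intro P hP x
    have := aux_union (fun b => {z : X | x * z = b}) P hP (hwlc x)
    convert this using 3
    ext z; simp
  refine ⟨?_, h2, ?_⟩
  · intro F
    have : {z : X | ∀ x ∈ F, ∀ y ∈ F, x ≠ y → x * z ≠ y * z} = Set.univ :=
      Set.eq_univ_of_forall fun z x _ y _ hxy h => hxy (hrc _ _ _ h)
    rw [this, mk_univ]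
  · classical
    have hT : #(X →₀ ℕ) = #X := by simp
    obtain ⟨r, wo, hr⟩ := ord_eq (X →₀ ℕ)
    have hseg : ∀ t, #{s | r s t} < #X := by
      intro t
      rw [← hT]
      exact card_typein_lt t hr
    obtain ⟨g, hg⟩ := aux_rec r wo.wf
      (fun s a t b => ∀ w ∈ s.support, ∀ z ∈ t.support, z * b ≠ w * a) (by
        intro t g
        have hP := aux_union (fun s : X →₀ ℕ => ((fun w => w * g s) '' (s.support : Set X)))
          {s | r s t} (hseg t) (fun s => s.support.finite_toSet.image _)
        have hB := aux_finunion (fun z => {x : X | z * x ∈ _}) t.support (h2 _ hP)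
        obtain ⟨x, hx⟩ : ∃ x, x ∉ (⋃ z ∈ t.support, {x : X | z * x ∈ ⋃ s ∈ {s | r s t}, (fun w => w * g s) '' (s.support : Set X)} : Set X) := by
          by_contra! hh
          rw [Set.eq_univ_of_forall hh, mk_univ] at hB
          exact hB.false
        refine ⟨x, fun s hs w hw z hz he => hx ?_⟩
        simp only [Set.mem_iUnion]
        refine ⟨z, hz, ?_⟩
        simp only [Set.mem_setOf_eq, Set.mem_iUnion]
        exact ⟨s, hs, w, hw, he.symm⟩)
    let d := TopologicalSpace.denseSeq (Set.Icc (0 : ℝ) 1)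
    have huniq : ∀ s t : X →₀ ℕ, ∀ w ∈ s.support, ∀ z ∈ t.support, w * g s = z * g t →
        s w = t z := by
      intro s t w hw z hz he
      rcases trichotomous_of r s t with h | h | h
      · exact absurd he.symm (hg s t h w hw z hz)
      · subst h; rw [hrc _ _ _ he]
      · exact absurd he (hg t s h z hz w hw)
    have hf : ∀ b : X, ∃ v : Set.Icc (0 : ℝ) 1, ∀ t : X →₀ ℕ, ∀ z ∈ t.support, z * g t = b →
        v = d (t z - 1) := by
      intro b
      by_cases h : ∃ t : X →₀ ℕ, ∃ z ∈ t.support, z * g t = b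
      · obtain ⟨s, w, hw, he⟩ := h
        refine ⟨d (s w - 1), fun t z hz he' => ?_⟩
        rw [huniq s t w hw z hz (he.trans he'.symm)]
      · push Not at h
        exact ⟨0, fun t z hz he => absurd he (h t z hz)⟩
    choose f hf using hf
    refine ⟨f, dense_iff_inter_open.2 ?_⟩
    rintro U hU ⟨G, hG⟩
    obtain ⟨F, u, hu, hsub⟩ := isOpen_pi_iff.1 hU G hG
    have hn : ∀ a : X, ∃ n, a ∈ F → d n ∈ u a := by
      intro a
      by_cases ha : a ∈ F
      · obtain ⟨n, hn⟩ := (TopologicalSpace.denseRange_denseSeq _).exists_mem_open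
          (hu a ha).1 ⟨_, (hu a ha).2⟩
        exact ⟨n, fun _ => hn⟩
      · exact ⟨0, fun h => absurd h ha⟩
    choose n hn using hn
    let t : X →₀ ℕ := Finsupp.indicator F (fun a _ => n a + 1)
    have ht : ∀ a ∈ F, t a = n a + 1 := fun a ha => Finsupp.indicator_of_mem ha _
    refine ⟨_, hsub ?_, g t, rfl⟩
    intro a ha
    have ha' : a ∈ F := ha
    have := hf (a * g t) t a (by simp [ht a ha']) rfl
    simp only [this, ht a ha', Nat.add_sub_cancel]
    exact hn a ha'
end

section
/- Let X be an infinite semigroup satisfying properties (1) and (2). Then a functional μ ∈ M(X) has the property that the mapping ν ↦ μ⋆ν from M(X) to M(X) is continuous for the weak* topologies if and only if μ is ℓ¹-representable. (In other words, the topological centre of the convolution algebra M(X) = ℓ∞(X)* is exactly ℓ¹(X); i.e., ℓ¹(X) is left strongly Arens irregular.) -/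
open BoundedContinuousFunction NormedSpace

section ConvDefs

variable {X Y Z : Type*} [TopologicalSpace X] [DiscreteTopology X]
  [TopologicalSpace Y] [DiscreteTopology Y] [TopologicalSpace Z] [DiscreteTopology Z]

/-- The inner integral: `x ↦ ν (y ↦ f (p x y))`, as a bounded function on `X`. -/
noncomputable def innerConv (p : X → Y → Z) (ν : StrongDual ℝ (Y →ᵇ ℝ)) (f : Z →ᵇ ℝ) : X →ᵇ ℝ :=
  BoundedContinuousFunction.ofNormedAddCommGroup
    (fun x => ν (f.compContinuous ⟨fun y => p x y, continuous_of_discreteTopology⟩))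
    continuous_of_discreteTopology (‖ν‖ * ‖f‖)
    (fun x => by
      calc ‖ν (f.compContinuous ⟨fun y => p x y, continuous_of_discreteTopology⟩)‖
          ≤ ‖ν‖ * ‖f.compContinuous ⟨fun y => p x y, continuous_of_discreteTopology⟩‖ :=
            ν.le_opNorm _
        _ ≤ ‖ν‖ * ‖f‖ := by
            gcongr
            exact f.norm_compContinuous_le _)

/-- The convolution `μ ⋆ ν` along the map `p`:
`(μ ⋆ ν) f = μ (x ↦ ν (y ↦ f (p x y)))`. -/
noncomputable def convMap (p : X → Y → Z) (μ : StrongDual ℝ (X →ᵇ ℝ)) (ν : StrongDual ℝ (Y →ᵇ ℝ)) :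
    StrongDual ℝ (Z →ᵇ ℝ) :=
  LinearMap.mkContinuous
    { toFun := fun f => μ (innerConv p ν f)
      map_add' := fun f g => by
        rw [← map_add]
        refine congrArg μ ?_
        ext x
        simp only [innerConv, coe_ofNormedAddCommGroup, coe_add, Pi.add_apply]
        exact map_add ν (f.compContinuous _) (g.compContinuous _)
      map_smul' := fun c f => by
        simp only [RingHom.id_apply]
        rw [← map_smul]
        refine congrArg μ ?_
        ext x
        simp only [innerConv, coe_ofNormedAddCommGroup, coe_smul, Pi.smul_apply]
        exact map_smul ν c (f.compContinuous _) }
    (‖μ‖ * ‖ν‖)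
    (fun f => by
      calc ‖μ (innerConv p ν f)‖ ≤ ‖μ‖ * ‖innerConv p ν f‖ := μ.le_opNorm _
        _ ≤ ‖μ‖ * (‖ν‖ * ‖f‖) := by
            gcongr
            exact norm_ofNormedAddCommGroup_le _
                (mul_nonneg (norm_nonneg ν) (norm_nonneg f)) _
        _ = ‖μ‖ * ‖ν‖ * ‖f‖ := by ring)

/-- `μ` is representable by an absolutely summable family (an element of `ℓ¹(X)`). -/
def L1Rep (μ : StrongDual ℝ (X →ᵇ ℝ)) : Prop :=
  ∃ g : X → ℝ, Summable (fun x => |g x|) ∧ ∀ f : X →ᵇ ℝ, μ f = ∑' x, g x * f x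

/-- A functional is positive if it is nonnegative on nonnegative functions. -/
def PosFunc (μ : StrongDual ℝ (X →ᵇ ℝ)) : Prop :=
  ∀ f : X →ᵇ ℝ, (∀ x, 0 ≤ f x) → 0 ≤ μ f

end ConvDefs

universe u

section Helpers

open Cardinal Filter Topology

/-- `V ≤ c` for the variation of `m` translated by `z` over `A`. -/
def Vle {X : Type*} [Mul X] (m : (X → ℝ) → ℝ) (z : X) (A : Set X) (c : ℝ) : Prop :=
  ∀ g : X → ℝ, (∀ x, |g x| ≤ 1) → (∀ x, x ∉ A → g x = 0) → m (fun x => g (x * z)) ≤ c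

lemma Vle.split {X : Type*} [Mul X] {m : (X → ℝ) → ℝ}
    (madd : ∀ h k : X → ℝ, (∀ x, |h x| ≤ 1) → (∀ x, |k x| ≤ 1) →
      m (fun x => h x + k x) = m h + m k)
    {z : X} {A B : Set X} (hAB : Disjoint A B) {c ε : ℝ}
    (h : Vle m z (A ∪ B) c) (hA : ¬ Vle m z A ε) : Vle m z B (c - ε) := by
  unfold Vle at hA
  push Not at hA
  obtain ⟨g, g1, g2, g3⟩ := hA
  intro k k1 k2
  have := h (fun x => g x + k x) (fun x => ?_) (fun x hx => ?_)
  · have e := madd (fun x => g (x * z)) (fun x => k (x * z)) (fun x => g1 _) (fun x => k1 _)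
    linarith
  · by_cases hx : x ∈ A
    · have : x ∉ B := fun h => Set.disjoint_left.1 hAB hx h
      simp only [k2 x this, add_zero]; exact g1 x
    · simp only [g2 x hx, zero_add]; exact k1 x
  · simp only [Set.mem_union, not_or] at hx
    simp [g2 x hx.1, k2 x hx.2]

/-- A Rosenthal-type disjointification lemma. -/
lemma rosenthal {D I : Type*} [Nonempty D] (V : I → Set I → ℝ → Prop) (ε : ℝ) (hε : 0 ≤ ε)
    (mono : ∀ i S T c, S ⊆ T → V i T c → V i S c)
    (monoc : ∀ i S c c', c ≤ c' → V i S c → V i S c')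
    (split : ∀ i S T c, Disjoint S T → V i (S ∪ T) c → ¬ V i S ε → V i T (c - ε))
    (n : ℕ) : ∀ a : List D → I, Function.Injective a →
      (∀ l, l.length = n + 1 → V (a l) (a '' {l' | l'.length = n + 1}) (n * ε)) →
      ∃ s : D → List D, Function.Injective s ∧ (∀ d, d ∈ s d) ∧ (∀ d, (s d).length = n + 1) ∧
        ∀ d, V (a (s d)) ((fun d' => a (s d')) '' {d' | d' ≠ d}) ε := by
  induction n with
  | zero =>
    intro a ha h
    refine ⟨fun d => [d], fun d d' h => by simpa using h, by simp, by simp, fun d => ?_⟩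
    refine monoc _ _ 0 _ hε (mono _ _ _ _ ?_ (by simpa using h [d] (by simp)))
    rintro _ ⟨d', -, rfl⟩
    exact ⟨[d'], by simp, rfl⟩
  | succ n ih =>
    intro a ha h
    by_cases hc : ∃ l : List D, l.length = n + 1 ∧
        ∀ d, V (a (d :: l)) ((fun d' => a (d' :: l)) '' {d' | d' ≠ d}) ε
    · obtain ⟨l, hl, hd⟩ := hc
      exact ⟨fun d => d :: l, fun d d' h => by simpa using h, by simp, by simp [hl], hd⟩
    · push Not at hc
      have : ∀ l : List D, ∃ d, l.length = n + 1 →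
          ¬ V (a (d :: l)) ((fun d' => a (d' :: l)) '' {d' | d' ≠ d}) ε := by
        intro l
        by_cases hl : l.length = n + 1
        · obtain ⟨d, hd⟩ := hc l hl
          exact ⟨d, fun _ => hd⟩
        · exact ⟨Classical.arbitrary D, fun h => absurd h hl⟩
      choose d hd using this
      obtain ⟨s, s1, s2, s3, s4⟩ := ih (fun l => a (d l :: l))
        (fun l l' h => by
          have := ha h
          simp only [List.cons.injEq] at this
          exact this.2) (fun l hl => by
          have := split (a (d l :: l)) ((fun d' => a (d' :: l)) '' {d' | d' ≠ d l})
            ((fun l => a (d l :: l)) '' {l' | l'.length = n + 1}) _ ?_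
            (mono _ _ _ _ ?_ (h (d l :: l) (by simp [hl]))) (hd l hl)
          · refine monoc _ _ _ _ (le_of_eq ?_) this
            push_cast; ring
          · rw [Set.disjoint_left]
            rintro _ ⟨d', h1, rfl⟩ ⟨l', h2, h3⟩
            have := ha h3
            simp only [List.cons.injEq] at this
            obtain ⟨h4, rfl⟩ := this
            exact h1 h4.symm
          · rintro _ (⟨d', h1, rfl⟩ | ⟨l', h2, rfl⟩)
            · exact ⟨_, by simp [hl], rfl⟩
            · exact ⟨_, by simpa using h2, rfl⟩)
      refine ⟨fun x => d (s x) :: s x, fun x y h => ?_, fun x => ?_, fun x => by simp [s3], s4⟩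
      · simp only [List.cons.injEq] at h
        exact s1 h.2
      · exact List.mem_cons_of_mem _ (s2 x)

/-- Transfinite choice of translates with disjoint injective blocks. -/
lemma exists_blocks {X I : Type u} [Semigroup X] [Infinite X]
    (h1 : ∀ F : Finset X,
      #{z : X | ∀ x ∈ F, ∀ y ∈ F, x ≠ y → x * z ≠ y * z} = #X)
    (h2 : ∀ P : Set X, #↥P < #X → ∀ x : X, #{z : X | x * z ∈ P} < #X)
    (hI : #I = #X) (F : I → Finset X) :
    ∃ z : I → X, Function.Injective (fun p : (i : I) × F i => (p.2 : X) * z p.1) := by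
  obtain ⟨r, wo, hr⟩ := Cardinal.ord_eq I
  have hX : ℵ₀ ≤ #X := Cardinal.aleph0_le_mk X
  have key : ∀ i (ih : ∀ j, r j i → X), ∃ w : X,
      (∀ x ∈ F i, ∀ y ∈ F i, x ≠ y → x * w ≠ y * w) ∧
      ∀ x ∈ F i, ∀ j (hj : r j i), ∀ y ∈ F j, x * w ≠ y * ih j hj := by
    intro i ih
    set P : Set X := ⋃ j : {j // r j i}, (fun y => y * ih j.1 j.2) '' (F j.1 : Set X) with hP
    have hlt : #{j // r j i} < #X := by
      rw [← hI]
      exact Cardinal.card_typein_lt (r := r) i hr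
    have hPc : #P < #X := by
      rcases lt_or_ge #{j // r j i} ℵ₀ with hf | hf
      · have : Finite {j // r j i} := Cardinal.lt_aleph0_iff_finite.1 hf
        have : P.Finite := Set.finite_iUnion fun j => (F j.1).finite_toSet.image _
        exact (Cardinal.lt_aleph0_iff_set_finite.2 this).trans_le hX
      · refine lt_of_le_of_lt ?_ hlt
        refine (Cardinal.mk_iUnion_le_sum_mk).trans ?_
        refine (Cardinal.sum_le_sum _ (fun _ => ℵ₀) fun j => ?_).trans ?_
        · exact (Cardinal.lt_aleph0_iff_set_finite.2 ((F j.1).finite_toSet.image _)).le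
        · simp [hf]
    have hU : ∀ G : Finset X, #(⋃ x ∈ G, {w : X | x * w ∈ P} : Set X) < #X := by
      intro G
      classical
      induction G using Finset.induction_on with
      | empty => simpa using lt_of_lt_of_le Cardinal.aleph0_pos hX
      | insert a G _ ih =>
        rw [Finset.set_biUnion_insert]
        exact (Cardinal.mk_union_le _ _).trans_lt (Cardinal.add_lt_of_lt hX (h2 P hPc a) ih)
    have : ¬ ({z : X | ∀ x ∈ F i, ∀ y ∈ F i, x ≠ y → x * z ≠ y * z} ⊆
        ⋃ x ∈ F i, {w : X | x * w ∈ P}) := fun h =>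
      absurd (Cardinal.mk_le_mk_of_subset h) (by rw [h1]; exact not_le.2 (hU _))
    obtain ⟨w, hw, hw'⟩ := Set.not_subset.1 this
    refine ⟨w, hw, fun x hx j hj y hy he => hw' ?_⟩
    simp only [Set.mem_iUnion]
    refine ⟨x, hx, ?_⟩
    show x * w ∈ P
    rw [hP, Set.mem_iUnion]
    exact ⟨⟨j, hj⟩, y, hy, he.symm⟩
  choose nx hn1 hn2 using key
  let z : I → X := wo.wf.fix nx
  have hz : ∀ i, z i = nx i (fun j _ => z j) := fun i => wo.wf.fix_eq nx i
  refine ⟨z, ?_⟩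
  have hne : ∀ i j, r j i → ∀ x ∈ F i, ∀ y ∈ F j, x * z i ≠ y * z j := by
    intro i j hj x hx y hy
    rw [hz i]
    exact hn2 i (fun j _ => z j) x hx j hj y hy
  rintro ⟨i, x, hx⟩ ⟨j, y, hy⟩ h
  simp only at h
  rcases trichotomous_of r i j with hij | rfl | hij
  · exact absurd h.symm (hne j i hij y hy x hx)
  · have : x = y := by
      by_contra hxy
      rw [hz i] at h
      exact hn1 i _ x hx y hy hxy h
    subst this
    rfl
  · exact absurd h (hne i j hij x hx y hy)

/-- The core: a functional `m` on bounded functions compatible with limits of right translates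
is determined by finite restrictions. -/
lemma core_one {X : Type u} [Semigroup X] [Infinite X]
    (h1 : ∀ F : Finset X,
      #{z : X | ∀ x ∈ F, ∀ y ∈ F, x ≠ y → x * z ≠ y * z} = #X)
    (h2 : ∀ P : Set X, #↥P < #X → ∀ x : X, #{z : X | x * z ∈ P} < #X)
    (m : (X → ℝ) → ℝ) (M : ℝ)
    (madd : ∀ h k : X → ℝ, (∀ x, |h x| ≤ 1) → (∀ x, |k x| ≤ 1) →
      m (fun x => h x + k x) = m h + m k)
    (mneg : ∀ h : X → ℝ, (∀ x, |h x| ≤ 1) → m (fun x => - h x) = - m h)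
    (mle : ∀ h : X → ℝ, (∀ x, |h x| ≤ 1) → m h ≤ M)
    (mlim : ∀ h : X → ℝ, (∀ x, |h x| ≤ 1) → ∀ (z : Finset X → X) (k : X → ℝ),
      (∀ x, Tendsto (fun K => h (x * z K)) atTop (𝓝 (k x))) →
      Tendsto (fun K => m (fun x => h (x * z K))) atTop (𝓝 (m k)))
    (f : X → ℝ) (hf : ∀ x, |f x| ≤ 1) :
    Tendsto (fun K : Finset X => m ((K : Set X).indicator f)) atTop (𝓝 (m f)) := by
  classical
  have hm0 : m (fun _ => 0) = 0 := by
    have := madd (fun _ => 0) (fun _ => 0) (by simp) (by simp)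
    simp at this; exact this
  suffices H : ∀ ε > 0, ∀ᶠ K : Finset X in atTop, |m f - m ((K : Set X).indicator f)| ≤ 6 * ε by
    rw [Metric.tendsto_nhds]
    intro ε hε
    filter_upwards [H (ε / 12) (by positivity)] with K hK
    rw [Real.dist_eq, abs_sub_comm]
    linarith
  intro ε hε
  let F : List (Finset X × Finset X) → Finset X := fun i => i.toFinset.biUnion fun d => d.1 ∪ d.2
  have hI : #(List (Finset X × Finset X)) = #X := by
    show #(List (Finset X × Finset X)) = #X
    rw [Cardinal.mk_list_eq_mk]
    simp
  obtain ⟨z, hz⟩ := exists_blocks h1 h2 hI F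
  set p := (fun p : (i : List (Finset X × Finset X)) × F i => (p.2 : X) * z p.1) with hp
  let B : Set (List (Finset X × Finset X)) → Set X := fun S => {w | ∃ i ∈ S, ∃ x ∈ F i, x * z i = w}
  have hBmono : ∀ S T, S ⊆ T → B S ⊆ B T := by
    rintro S T h _ ⟨i, hi, x, hx, rfl⟩
    exact ⟨i, h hi, x, hx, rfl⟩
  obtain ⟨n, hn⟩ := exists_nat_ge (M / ε)
  have hMn : M ≤ n * ε := by rwa [div_le_iff₀ hε] at hn
  obtain ⟨s, s1, s2, -, s4⟩ := rosenthal (D := Finset X × Finset X) (fun i S c => Vle m (z i) (B S) c) ε hε.le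
    (fun i S T c hST h g g1 g2 => h g g1 (fun x hx => g2 x fun h => hx (hBmono _ _ hST h)))
    (fun i S c c' hc h g g1 g2 => (h g g1 g2).trans hc)
    (fun i S T c hd h hS => Vle.split madd (A := B S) (B := B T) (by
      rw [Set.disjoint_left]
      rintro _ ⟨i, hi, x, hx, rfl⟩ ⟨j, hj, y, hy, h⟩
      have := @hz ⟨j, y, hy⟩ ⟨i, x, hx⟩ h
      have hij : j = i := congrArg Sigma.fst this
      subst hij
      exact Set.disjoint_left.1 hd hi hj) (by
      intro g g1 g2
      refine h g g1 fun x hx => g2 x fun hx' => hx ?_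
      rcases hx' with ⟨i, hi, h⟩ | ⟨i, hi, h⟩
      · exact ⟨i, Or.inl hi, h⟩
      · exact ⟨i, Or.inr hi, h⟩) hS) n id Function.injective_id
    (fun l _ g g1 g2 => (mle _ fun x => g1 _).trans hMn)
  simp only [id] at s4
  -- functions built from blocks
  let G : Set (List (Finset X × Finset X)) → (List (Finset X × Finset X) → X → ℝ) → X → ℝ := fun S u =>
    Function.extend p (fun q => if q.1 ∈ S then u q.1 q.2 else 0) 0
  have hG : ∀ S u i x, x ∈ F i → G S u (x * z i) = if i ∈ S then u i x else 0 := by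
    intro S u i x hx
    exact hz.extend_apply (fun q : (i : List (Finset X × Finset X)) × F i => if q.1 ∈ S then u q.1 q.2 else 0) 0
      ⟨i, ⟨x, hx⟩⟩
  have hG' : ∀ S u w, (¬ ∃ i, ∃ x ∈ F i, x * z i = w) → G S u w = 0 := by
    intro S u w hw
    refine Function.extend_apply' _ _ _ ?_
    rintro ⟨⟨i, x, hx⟩, h⟩
    exact hw ⟨i, x, hx, h⟩
  have hGb : ∀ S u, (∀ i x, |u i x| ≤ 1) → ∀ w, |G S u w| ≤ 1 := by
    intro S u hu w
    by_cases hw : ∃ i, ∃ x ∈ F i, x * z i = w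
    · obtain ⟨i, x, hx, rfl⟩ := hw
      rw [hG S u i x hx]
      split_ifs
      · exact hu i x
      · simp
    · rw [hG' S u w hw]; simp
  let diag : List (Finset X × Finset X) → (X → ℝ) → ℝ := fun i t => m (fun x => G {i} (fun _ => t) (x * z i))
  have hdiag : ∀ i t t', (∀ x, |t x| ≤ 1) → (∀ x, |t' x| ≤ 1) →
      diag i (fun x => t x + t' x) = diag i t + diag i t' := by
    intro i t t' ht ht'
    simp only [diag]
    rw [← madd _ _ (fun x => hGb {i} (fun _ => t) (fun _ => ht) _)
      (fun x => hGb {i} (fun _ => t') (fun _ => ht') _)]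
    congr 1
    funext x
    by_cases hw : ∃ j, ∃ y ∈ F j, y * z j = x * z i
    · obtain ⟨j, y, hy, h⟩ := hw
      rw [← h, hG {i} (fun _ => t) _ _ hy, hG {i} (fun _ => t') _ _ hy,
        hG {i} (fun _ x => t x + t' x) _ _ hy]
      split_ifs <;> simp
    · rw [hG' {i} (fun _ => t) _ hw, hG' {i} (fun _ => t') _ hw,
        hG' {i} (fun _ x => t x + t' x) _ hw]; simp
  have hoff : ∀ u : List (Finset X × Finset X) → X → ℝ, (∀ i x, |u i x| ≤ 1) → ∀ d : Finset X × Finset X,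
      |m (fun x => G (Set.range s) u (x * z (s d))) - diag (s d) (u (s d))| ≤ ε := by
    intro u hu d
    set T : Set (List (Finset X × Finset X)) := (fun d' => s d') '' {d' | d' ≠ d} with hT
    have hsplit : m (fun x => G (Set.range s) u (x * z (s d))) =
        diag (s d) (u (s d)) + m (fun x => G T u (x * z (s d))) := by
      simp only [diag]
      rw [← madd _ _ (fun x => hGb _ _ (fun _ => hu _) _) (fun x => hGb _ _ hu _)]
      congr 1
      funext x
      by_cases hw : ∃ j, ∃ y ∈ F j, y * z j = x * z (s d)
      · obtain ⟨j, y, hy, h⟩ := hw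
        rw [← h, hG {s d} (fun _ => u (s d)) _ _ hy, hG _ u _ _ hy, hG _ u _ _ hy]
        by_cases hj : j = s d
        · subst hj
          have : s d ∉ T := by
            rintro ⟨d', h1, h2⟩
            exact h1 (s1 h2)
          simp [this]
        · by_cases hj' : j ∈ Set.range s
          · have : j ∈ T := by
              obtain ⟨d', rfl⟩ := hj'
              exact ⟨d', fun h => hj (by rw [h]), rfl⟩
            simp [hj, this, hj']
          · have : j ∉ T := by
              rintro ⟨d', -, rfl⟩
              exact hj' ⟨d', rfl⟩
            simp only [hj', this, Set.mem_singleton_iff, hj, if_false, add_zero]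
      · rw [hG' {s d} (fun _ => u (s d)) _ hw, hG' _ u _ hw, hG' _ u _ hw]; simp
    have hsupp : ∀ w, w ∉ B T → G T u w = 0 := by
      intro w hw
      by_cases hw' : ∃ i, ∃ x ∈ F i, x * z i = w
      · obtain ⟨i, x, hx, rfl⟩ := hw'
        rw [hG _ _ _ _ hx, if_neg]
        intro hi
        exact hw ⟨i, hi, x, hx, rfl⟩
      · exact hG' _ _ _ hw'
    rw [hsplit, add_sub_cancel_left, abs_le]
    constructor
    · have := s4 d (fun w => - G T u w) (fun w => by rw [abs_neg]; exact hGb _ _ hu w)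
        (fun w hw => by simp [hsupp w hw])
      rw [mneg _ (fun x => hGb _ _ hu _)] at this
      linarith
    · exact s4 d (G T u) (hGb _ _ hu) hsupp
  have hL : ∀ u : List (Finset X × Finset X) → X → ℝ, (∀ i x, |u i x| ≤ 1) → ∀ (r : Finset X → Finset X × Finset X) (k : X → ℝ),
      (∀ K, K ⊆ (r K).1 ∪ (r K).2) →
      (∀ x, Tendsto (fun K => u (s (r K)) x) atTop (𝓝 (k x))) →
      ∀ᶠ K in atTop, |diag (s (r K)) (u (s (r K))) - m k| ≤ 2 * ε := by
    intro u hu r k hr hk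
    have := mlim (G (Set.range s) u) (hGb _ _ hu) (fun K => z (s (r K))) k (fun x => by
      refine (hk x).congr' ?_
      filter_upwards [eventually_ge_atTop {x}] with K hK
      have hx : x ∈ F (s (r K)) := by
        simp only [F, Finset.mem_biUnion, List.mem_toFinset]
        exact ⟨r K, s2 _, hr K (hK (Finset.mem_singleton_self x))⟩
      rw [hG _ _ _ _ hx, if_pos ⟨_, rfl⟩])
    filter_upwards [Metric.tendsto_nhds.1 this ε hε] with K hK
    rw [Real.dist_eq] at hK
    have h3 := hoff u hu (r K)
    rw [abs_le] at h3 ⊢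
    rw [abs_lt] at hK
    constructor <;> linarith
  have hind : ∀ K : Finset X, ∀ x, |(K : Set X).indicator f x| ≤ 1 := by
    intro K x
    by_cases hx : x ∈ (K : Set X)
    · rw [Set.indicator_of_mem hx]; exact hf x
    · rw [Set.indicator_of_notMem hx]; simp
  have hH : ∀ K : Finset X, ∃ H : Finset X,
      |diag (s (K, H)) ((K : Set X).indicator f) - m ((K : Set X).indicator f)| ≤ 2 * ε := by
    intro K
    exact (hL (fun _ => (K : Set X).indicator f) (fun _ => hind K) (fun H => (K, H)) _
      (fun H => Finset.subset_union_right) (fun x => tendsto_const_nhds)).exists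
  choose H hH using hH
  have e2 := hL (fun _ => f) (fun _ => hf) (fun K => (K, H K)) f
    (fun K => Finset.subset_union_left) (fun x => tendsto_const_nhds)
  have e3 := hL (fun i => fun x => if x ∈ (Function.invFun s i).1 then 0 else f x)
    (fun i x => by
      split_ifs
      · simp
      · exact hf x) (fun K => (K, H K)) (fun _ => 0)
    (fun K => Finset.subset_union_left) (fun x => by
      refine tendsto_const_nhds.congr' ?_
      filter_upwards [eventually_ge_atTop {x}] with K hK
      rw [Function.leftInverse_invFun s1, if_pos (hK (Finset.mem_singleton_self x))])
  filter_upwards [e2, e3] with K k2 k3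
  rw [Function.leftInverse_invFun s1, hm0] at k3
  have k1 := hH K
  have hadd := hdiag (s (K, H K)) ((K : Set X).indicator f) (fun x => if x ∈ K then 0 else f x)
    (hind K) (fun x => by
      split_ifs
      · simp
      · exact hf x)
  have hfe : (fun x => (K : Set X).indicator f x + if x ∈ K then 0 else f x) = f := by
    funext x
    by_cases hx : x ∈ K <;> simp [hx]
  rw [hfe] at hadd
  simp only at k2 k3
  rw [hadd] at k2
  rw [abs_le] at *
  constructor <;> linarith [k1.1, k1.2, k2.1, k2.2, k3.1, k3.2]

/-- Turn a bounded function on a discrete space into a `BoundedContinuousFunction`. -/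
noncomputable def mkB {X : Type*} [TopologicalSpace X] [DiscreteTopology X] (h : X → ℝ) (C : ℝ)
    (hC : ∀ x, |h x| ≤ C) : X →ᵇ ℝ :=
  BoundedContinuousFunction.ofNormedAddCommGroup h continuous_of_discreteTopology C hC

open Classical in
/-- The functional `μ` viewed on plain functions (zero on unbounded ones). -/
noncomputable def plainF {X : Type*} [TopologicalSpace X] [DiscreteTopology X]
    (μ : StrongDual ℝ (X →ᵇ ℝ)) (h : X → ℝ) : ℝ :=
  if hb : ∃ C, ∀ x, |h x| ≤ C then μ (mkB h hb.choose hb.choose_spec) else 0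

lemma plainF_coe {X : Type*} [TopologicalSpace X] [DiscreteTopology X]
    (μ : StrongDual ℝ (X →ᵇ ℝ)) (f : X →ᵇ ℝ) : plainF μ f = μ f := by
  have hb : ∃ C, ∀ x, |f x| ≤ C := ⟨‖f‖, fun x => f.norm_coe_le_norm x⟩
  rw [plainF, dif_pos hb]
  congr 1

lemma plainF_mkB {X : Type*} [TopologicalSpace X] [DiscreteTopology X]
    (μ : StrongDual ℝ (X →ᵇ ℝ)) (h : X → ℝ) (C : ℝ) (hC : ∀ x, |h x| ≤ C) :
    plainF μ h = μ (mkB h C hC) := plainF_coe μ (mkB h C hC)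

/-- Evaluation at a point as an element of the dual. -/
noncomputable def ptEval {X : Type*} [TopologicalSpace X] (x : X) : StrongDual ℝ (X →ᵇ ℝ) :=
  BoundedContinuousFunction.evalCLM ℝ x

lemma lim_of_continuous {X : Type*} [Semigroup X] [TopologicalSpace X] [DiscreteTopology X]
    (μ : StrongDual ℝ (X →ᵇ ℝ))
    (hμ : Continuous fun ν : WeakDual ℝ (X →ᵇ ℝ) =>
      StrongDual.toWeakDual (convMap (· * ·) μ (WeakDual.toStrongDual ν)))
    {J : Type*} (l : Filter J) (f k : X →ᵇ ℝ) (z : J → X)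
    (hk : ∀ x, Tendsto (fun j => f (x * z j)) l (𝓝 (k x))) :
    Tendsto (fun j => μ (f.compContinuous ⟨fun x => x * z j, continuous_of_discreteTopology⟩))
      l (𝓝 (μ k)) := by
  rw [tendsto_iff_ultrafilter]
  intro U hU
  let e : J → WeakDual ℝ (X →ᵇ ℝ) := fun j => StrongDual.toWeakDual (ptEval (z j))
  have hcomp := WeakDual.isCompact_closedBall (𝕜 := ℝ) (E := X →ᵇ ℝ) 0 1
  have hmem : ∀ j, e j ∈ WeakDual.toStrongDual ⁻¹' Metric.closedBall (0 : StrongDual ℝ (X →ᵇ ℝ)) 1 := by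
    intro j
    show ptEval (z j) ∈ Metric.closedBall (0 : StrongDual ℝ (X →ᵇ ℝ)) 1
    refine (mem_closedBall_zero_iff (E := StrongDual ℝ (X →ᵇ ℝ))).2 ?_
    refine ContinuousLinearMap.opNorm_le_bound _ zero_le_one fun g => ?_
    rw [one_mul]
    exact g.norm_coe_le_norm _
  obtain ⟨ν, -, hν⟩ := hcomp.ultrafilter_le_nhds (U.map e)
    (by rw [le_principal_iff]; exact Filter.mem_map.2 (Filter.univ_mem' hmem))
  have hν' : Tendsto e U (𝓝 ν) := hν
  have ev : ∀ (g : X →ᵇ ℝ), Continuous fun ν : WeakDual ℝ (X →ᵇ ℝ) => ν g :=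
    fun g => WeakDual.eval_continuous g
  have hc := ((ev f).comp hμ).continuousAt.tendsto.comp hν'
  have e1 : ∀ j, ((fun ν : WeakDual ℝ (X →ᵇ ℝ) => ν f) ∘ fun ν : WeakDual ℝ (X →ᵇ ℝ) =>
      StrongDual.toWeakDual (convMap (· * ·) μ (WeakDual.toStrongDual ν))) (e j)
      = μ (f.compContinuous ⟨fun x => x * z j, continuous_of_discreteTopology⟩) := by
    intro j
    show μ (innerConv _ _ f) = _
    congr 1
  have e2 : innerConv (· * ·) (WeakDual.toStrongDual ν) f = k := by
    ext x
    have h1 := ((ev (f.compContinuous ⟨fun y => x * y, continuous_of_discreteTopology⟩)).continuousAt.tendsto.comp hν')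
    exact tendsto_nhds_unique h1 ((hk x).mono_left hU)
  have e3 : ((fun ν : WeakDual ℝ (X →ᵇ ℝ) => ν f) ∘ fun ν : WeakDual ℝ (X →ᵇ ℝ) =>
      StrongDual.toWeakDual (convMap (· * ·) μ (WeakDual.toStrongDual ν))) ν = μ k := by
    show μ (innerConv _ _ f) = _
    rw [e2]
  rw [e3] at hc
  exact hc.congr e1

lemma continuous_of_l1 {X : Type*} [Semigroup X] [TopologicalSpace X] [DiscreteTopology X]
    (μ : StrongDual ℝ (X →ᵇ ℝ)) (h : L1Rep μ) :
    Continuous fun ν : WeakDual ℝ (X →ᵇ ℝ) =>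
      StrongDual.toWeakDual (convMap (· * ·) μ (WeakDual.toStrongDual ν)) := by
  obtain ⟨g, hg, hμ⟩ := h
  refine WeakDual.continuous_of_continuous_eval fun f => ?_
  let φ : X → X →ᵇ ℝ := fun x =>
    g x • f.compContinuous ⟨fun y => x * y, continuous_of_discreteTopology⟩
  have hφ : Summable φ := by
    refine Summable.of_norm_bounded (hg.mul_right ‖f‖) fun x => ?_
    rw [norm_smul, Real.norm_eq_abs]
    gcongr
    exact f.norm_compContinuous_le _
  have : ∀ ν : WeakDual ℝ (X →ᵇ ℝ), StrongDual.toWeakDual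
      (convMap (· * ·) μ (WeakDual.toStrongDual ν)) f = ν (∑' x, φ x) := by
    intro ν
    show μ (innerConv _ _ f) = WeakDual.toStrongDual ν (∑' x, φ x)
    rw [hμ, ContinuousLinearMap.map_tsum _ hφ]
    refine tsum_congr fun x => ?_
    simp only [φ, map_smul, smul_eq_mul]
    rfl
  simp only [this]
  exact WeakDual.eval_continuous _

lemma l1_of_restrict {X : Type*} [TopologicalSpace X] [DiscreteTopology X]
    (μ : StrongDual ℝ (X →ᵇ ℝ))
    (h : ∀ f : X →ᵇ ℝ, Tendsto (fun K : Finset X => plainF μ ((K : Set X).indicator f)) atTop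
      (𝓝 (μ f))) : L1Rep μ := by
  classical
  let δ : X → X →ᵇ ℝ := fun x => mkB (Pi.single x 1) 1 (fun y => by
    by_cases hy : y = x
    · subst hy; simp
    · simp [hy])
  have hδ : ∀ (K : Finset X) (c : X → ℝ) y, (∑ x ∈ K, c x • δ x) y = if y ∈ K then c y else 0 := by
    intro K c y
    rw [BoundedContinuousFunction.coe_sum, Finset.sum_apply]
    have : ∀ x, (c x • δ x) y = if y = x then c x else 0 := by
      intro x
      show c x * (Pi.single x 1 : X → ℝ) y = _
      simp [Pi.single_apply]
    simp only [this]
    simp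
  have hsum : ∀ f : X →ᵇ ℝ, HasSum (fun x => μ (δ x) * f x) (μ f) := by
    intro f
    refine (h f).congr fun K => ?_
    have : (K : Set X).indicator f = ⇑(∑ x ∈ K, f x • δ x) := by
      funext y
      rw [hδ]
      simp [Set.indicator_apply]
    rw [this, plainF_coe, map_sum]
    refine Finset.sum_congr rfl fun x _ => ?_
    rw [map_smul, smul_eq_mul, mul_comm]
  refine ⟨fun x => μ (δ x), ?_, fun f => (hsum f).tsum_eq.symm⟩
  refine summable_of_sum_le (c := ‖μ‖) (fun x => abs_nonneg _) fun K => ?_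
  have e : ∑ x ∈ K, |μ (δ x)| = μ (∑ x ∈ K, (SignType.sign (μ (δ x)) : ℝ) • δ x) := by
    rw [map_sum]
    refine Finset.sum_congr rfl fun x _ => ?_
    rw [map_smul, smul_eq_mul, sign_mul_self]
  rw [e]
  refine (le_abs_self _).trans ((μ.le_opNorm _).trans ?_)
  refine mul_le_of_le_one_right (norm_nonneg _) ?_
  rw [BoundedContinuousFunction.norm_le zero_le_one]
  intro y
  rw [hδ]
  split_ifs
  · rcases lt_trichotomy (μ (δ y)) 0 with h | h | h <;> simp [h]
  · simp

end Helpers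

open Cardinal

/-- For an infinite semigroup satisfying (1) and (2), the topological centre of the
convolution algebra `M(X)` is exactly `ℓ¹(X)`. -/
theorem stmt4 {X : Type*} [Semigroup X] [TopologicalSpace X] [DiscreteTopology X] [Infinite X]
    (h1 : ∀ F : Finset X,
      #{z : X | ∀ x ∈ F, ∀ y ∈ F, x ≠ y → x * z ≠ y * z} = #X)
    (h2 : ∀ P : Set X, #↥P < #X → ∀ x : X, #{z : X | x * z ∈ P} < #X)
    (μ : StrongDual ℝ (X →ᵇ ℝ)) :
    (Continuous fun ν : WeakDual ℝ (X →ᵇ ℝ) =>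
      StrongDual.toWeakDual (convMap (· * ·) μ (WeakDual.toStrongDual ν))) ↔ L1Rep μ := by

  refine ⟨fun hμ => l1_of_restrict μ fun f => ?_, continuous_of_l1 μ⟩
  have key := core_one h1 h2 (plainF μ) ‖μ‖
    (fun h k hh hk => by
      rw [plainF_mkB μ h 1 hh, plainF_mkB μ k 1 hk, ← map_add, ← plainF_coe]
      rfl)
    (fun h hh => by
      rw [plainF_mkB μ h 1 hh, ← map_neg, ← plainF_coe]
      rfl)
    (fun h hh => by
      rw [plainF_mkB μ h 1 hh]
      refine (le_abs_self _).trans ((μ.le_opNorm _).trans ?_)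
      refine mul_le_of_le_one_right (norm_nonneg _) ?_
      rw [BoundedContinuousFunction.norm_le zero_le_one]
      exact hh)
    (fun h hh z k hk => by
      have hkb : ∀ x, |k x| ≤ 1 := fun x =>
        le_of_tendsto (hk x).abs (Filter.Eventually.of_forall fun K => hh _)
      rw [plainF_mkB μ k 1 hkb]
      refine (lim_of_continuous μ hμ Filter.atTop (mkB h 1 hh) (mkB k 1 hkb) z hk).congr fun K => ?_
      rw [← plainF_coe]
      rfl)
  -- scaling
  set c : ℝ := ‖f‖ + 1 with hc
  have hc0 : 0 < c := by positivity
  have hb : ∀ x, |(c⁻¹ • f) x| ≤ 1 := by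
    intro x
    have := f.norm_coe_le_norm x
    rw [Real.norm_eq_abs] at this
    show |c⁻¹ * f x| ≤ 1
    rw [abs_mul, abs_of_pos (inv_pos.2 hc0), inv_mul_le_iff₀ hc0]
    linarith
  have := (key (c⁻¹ • f : X →ᵇ ℝ) hb).const_mul c
  rw [plainF_coe, map_smul, smul_eq_mul, mul_inv_cancel_left₀ hc0.ne'] at this
  refine this.congr fun K => ?_
  have hK : ∀ x, |(K : Set X).indicator f x| ≤ ‖f‖ := by
    intro x
    by_cases hx : x ∈ (K : Set X)
    · rw [Set.indicator_of_mem hx]; exact f.norm_coe_le_norm x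
    · rw [Set.indicator_of_notMem hx]; simp
  have e : (K : Set X).indicator (c⁻¹ • f : X →ᵇ ℝ) = ⇑(c⁻¹ • mkB _ _ hK) := by
    funext x
    show _ = c⁻¹ * (K : Set X).indicator f x
    by_cases hx : x ∈ (K : Set X)
    · rw [Set.indicator_of_mem hx, Set.indicator_of_mem hx]; rfl
    · rw [Set.indicator_of_notMem hx, Set.indicator_of_notMem hx]; simp
  rw [e, plainF_coe, map_smul, smul_eq_mul, mul_inv_cancel_left₀ hc0.ne', plainF_mkB μ _ _ hK]
end

section
/- Let X be a semigroup acting on a set Y (both discrete) via m : X × Y → Y with m(s, m(s', y)) = m(ss', y). If μ ∈ M(X) is ℓ¹-representable, then the mapping ν ↦ μ⋆ν from M(Y) to itself is continuous for the weak* topologies. -/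
open BoundedContinuousFunction NormedSpace

/-- If `μ` is `ℓ¹`-representable then `ν ↦ μ ⋆ ν` is weak*-weak* continuous. -/
theorem stmt8 {X Y : Type*} [Semigroup X] [TopologicalSpace X] [DiscreteTopology X]
    [TopologicalSpace Y] [DiscreteTopology Y]
    (m : X × Y → Y) (hm : ∀ s s' : X, ∀ y : Y, m (s, m (s', y)) = m (s * s', y))
    (μ : StrongDual ℝ (X →ᵇ ℝ)) (hμ : L1Rep μ) :
    Continuous fun ν : WeakDual ℝ (Y →ᵇ ℝ) =>
      StrongDual.toWeakDual (convMap (fun x y => m (x, y)) μ (WeakDual.toStrongDual ν)) := by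
  obtain ⟨g, hg, hrep⟩ := hμ
  refine WeakDual.continuous_of_continuous_eval fun f => ?_
  let F : X → (Y →ᵇ ℝ) := fun x =>
    f.compContinuous ⟨fun y => m (x, y), continuous_of_discreteTopology⟩
  have hs : Summable fun x => g x • F x := by
    refine Summable.of_norm_bounded (hg.mul_right ‖f‖) fun x => ?_
    rw [norm_smul, Real.norm_eq_abs]
    exact mul_le_mul_of_nonneg_left (f.norm_compContinuous_le _) (abs_nonneg _)
  have key : ∀ ν : WeakDual ℝ (Y →ᵇ ℝ),
      (StrongDual.toWeakDual (convMap (fun x y => m (x, y)) μ (WeakDual.toStrongDual ν))) f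
        = ν (∑' x, g x • F x) := by
    intro ν
    have h1 : (WeakDual.toStrongDual ν) (∑' x, g x • F x)
        = ∑' x, (WeakDual.toStrongDual ν) (g x • F x) :=
      (WeakDual.toStrongDual ν).map_tsum hs
    have h2 : μ (innerConv (fun x y => m (x, y)) (WeakDual.toStrongDual ν) f)
        = (WeakDual.toStrongDual ν) (∑' x, g x • F x) := by
      rw [hrep, h1]
      refine tsum_congr fun x => ?_
      rw [map_smul, smul_eq_mul]
      rfl
    exact h2
  simp_rw [key]
  exact WeakDual.eval_continuous _
end

section
/- Let X be a semigroup acting on a set Y (both discrete) via m : X × Y → Y with m(s, m(s', y)) = m(ss', y). If (μ_n) is a sequence of ℓ¹-representable elements of M(X) converging in the weak* topology to an ℓ¹-representable μ ∈ M(X), and (ν_n) is a sequence of ℓ¹-representable elements of M(Y) converging in the weak* topology to an ℓ¹-representable ν ∈ M(Y), then μ_n⋆ν_n converges to μ⋆ν in the weak* topology of M(Y). -/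
open BoundedContinuousFunction NormedSpace

open Filter

/-- Schur's theorem, by a Baire category argument on the compact cube `[-1,1]^Y`. -/
theorem schur_l1 {Y : Type*} (h : ℕ → Y → ℝ) (hs : ∀ n, Summable (fun y => |h n y|))
    (H : ∀ f : Y → ℝ, (∀ y, |f y| ≤ 1) → Tendsto (fun n => ∑' y, h n y * f y) atTop (nhds 0)) :
    Tendsto (fun n => ∑' y, |h n y|) atTop (nhds 0) := by
  classical
  have hsum : ∀ n (f : Y → ℝ), (∀ y, |f y| ≤ 1) → Summable (fun y => h n y * f y) := by
    intro n f hf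
    refine Summable.of_norm_bounded (hs n) (fun y => ?_)
    rw [Real.norm_eq_abs, abs_mul]
    exact mul_le_of_le_one_right (abs_nonneg _) (hf y)
  have hK : ∀ (f : Y → Set.Icc (-1 : ℝ) 1) (y : Y), |(f y : ℝ)| ≤ 1 := fun f y =>
    abs_le.2 ⟨(f y).2.1, (f y).2.2⟩
  have hcont : ∀ n, Continuous (fun f : Y → Set.Icc (-1 : ℝ) 1 => ∑' y, h n y * (f y : ℝ)) := by
    intro n
    refine continuous_tsum (fun y => ?_) (hs n) (fun y f => ?_)
    · exact continuous_const.mul (continuous_subtype_val.comp (continuous_apply y))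
    · rw [Real.norm_eq_abs, abs_mul]
      exact mul_le_of_le_one_right (abs_nonneg _) (hK f y)
  have hpt : ∀ y, Tendsto (fun n => |h n y|) atTop (nhds 0) := by
    intro y
    have := H (fun z => if z = y then 1 else 0) (fun z => by split_ifs <;> simp)
    simp only [mul_ite, mul_one, mul_zero, tsum_ite_eq] at this
    simpa using this.abs
  rw [Metric.tendsto_atTop]
  intro ε hε
  let F : ℕ → Set (Y → Set.Icc (-1 : ℝ) 1) := fun N =>
    ⋂ n ≥ N, {f | |∑' y, h n y * (f y : ℝ)| ≤ ε / 4}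
  have hFc : ∀ N, IsClosed (F N) := fun N =>
    isClosed_biInter fun n _ => isClosed_le (hcont n).abs continuous_const
  have hFu : ⋃ N, F N = Set.univ := by
    refine Set.eq_univ_of_forall fun f => ?_
    obtain ⟨N, hN⟩ := (Metric.tendsto_atTop.1 (H (fun y => (f y : ℝ)) (hK f))) (ε / 4) (by positivity)
    refine Set.mem_iUnion.2 ⟨N, Set.mem_iInter₂.2 fun n hn => ?_⟩
    have := hN n hn
    rw [Real.dist_eq, sub_zero] at this
    exact this.le
  haveI : Nonempty (Y → Set.Icc (-1 : ℝ) 1) := ⟨fun _ => ⟨0, by norm_num, by norm_num⟩⟩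
  obtain ⟨N, f0, hf0⟩ := nonempty_interior_of_iUnion_of_closed hFc hFu
  rw [mem_interior_iff_mem_nhds, nhds_pi, Filter.mem_pi] at hf0
  obtain ⟨I, hI, t, ht, hsub⟩ := hf0
  have hS : Tendsto (fun n => ∑ y ∈ hI.toFinset, |h n y|) atTop (nhds 0) := by
    simpa using tendsto_finsetSum hI.toFinset (fun y _ => hpt y)
  obtain ⟨M, hM⟩ := (Metric.tendsto_atTop.1 hS) (ε / 4) (by positivity)
  refine ⟨max N M, fun n hn => ?_⟩
  have hnN : N ≤ n := le_trans (le_max_left _ _) hn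
  have h1 := hM n (le_trans (le_max_right _ _) hn)
  rw [Real.dist_eq, sub_zero] at h1
  have h1' := lt_of_abs_lt h1
  let f : Y → Set.Icc (-1 : ℝ) 1 := fun y => if y ∈ I then f0 y else
    if 0 ≤ h n y then ⟨1, by norm_num, by norm_num⟩ else ⟨-1, by norm_num, by norm_num⟩
  have hfF : f ∈ F N := by
    apply hsub
    intro y hy
    simp only [f, if_pos hy]
    exact mem_of_mem_nhds (ht y)
  have h2 : |∑' y, h n y * (f y : ℝ)| ≤ ε / 4 := Set.mem_iInter₂.1 hfF n hnN
  have h2' := le_of_abs_le h2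
  let g : Y → ℝ := fun y => if y ∈ hI.toFinset then |h n y| else 0
  have hg : HasSum g (∑ y ∈ hI.toFinset, |h n y|) := by
    have : HasSum g (∑ y ∈ hI.toFinset, g y) :=
      hasSum_sum_of_ne_finset_zero (fun y hy => by simp only [g, if_neg hy])
    have e : ∑ y ∈ hI.toFinset, g y = ∑ y ∈ hI.toFinset, |h n y| :=
      Finset.sum_congr rfl (fun y hy => by simp only [g, if_pos hy])
    rwa [e] at this
  have hle : ∀ y, |h n y| ≤ h n y * (f y : ℝ) + 2 * g y := by
    intro y
    by_cases hy : y ∈ I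
    · have e : g y = |h n y| := by simp [g, hy]
      have : |h n y * (f y : ℝ)| ≤ |h n y| := by
        rw [abs_mul]
        exact mul_le_of_le_one_right (abs_nonneg _) (hK f y)
      rw [e]
      linarith [neg_le_of_abs_le this]
    · have e : g y = 0 := by simp [g, hy]
      rw [e]
      by_cases hp : 0 ≤ h n y
      · simp [f, hy, hp, abs_of_nonneg hp]
      · simp [f, hy, hp, abs_of_neg (not_le.1 hp)]
  have hfs := (hsum n (fun y => (f y : ℝ)) (hK f)).hasSum
  have := hasSum_le hle (hs n).hasSum (hfs.add (hg.mul_left 2))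
  rw [Real.dist_eq, sub_zero, abs_of_nonneg (tsum_nonneg fun y => abs_nonneg _)]
  linarith

theorem L1Rep.tendsto_norm {Y : Type*} [TopologicalSpace Y] [DiscreteTopology Y]
    (νseq : ℕ → StrongDual ℝ (Y →ᵇ ℝ)) (ν : StrongDual ℝ (Y →ᵇ ℝ))
    (hνseq : ∀ n, L1Rep (νseq n)) (hν : L1Rep ν)
    (hlim : ∀ f, Tendsto (fun n => νseq n f) atTop (nhds (ν f))) :
    Tendsto (fun n => ‖νseq n - ν‖) atTop (nhds 0) := by
  choose g hg hgf using hνseq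
  obtain ⟨k, hk, hkf⟩ := hν
  have hs : ∀ n, Summable (fun y => |g n y - k y|) := fun n =>
    Summable.of_nonneg_of_le (fun y => abs_nonneg _) (fun y => abs_sub _ _) ((hg n).add hk)
  have hsm : ∀ (g : Y → ℝ), Summable (fun y => |g y|) → ∀ f : Y →ᵇ ℝ,
      Summable (fun y => g y * f y) := by
    intro g hg f
    refine Summable.of_norm_bounded (hg.mul_right ‖f‖) (fun y => ?_)
    rw [Real.norm_eq_abs, abs_mul]
    exact mul_le_mul_of_nonneg_left (f.norm_coe_le_norm y) (abs_nonneg _)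
  have hrep : ∀ n (f : Y →ᵇ ℝ), (νseq n - ν) f = ∑' y, (g n y - k y) * f y := by
    intro n f
    simp only [sub_mul]
    rw [(hsm _ (hg n) f).tsum_sub (hsm _ hk f), ← hgf, ← hkf]
    rfl
  have key := schur_l1 (fun n y => g n y - k y) hs (by
    intro f hf
    let f' : Y →ᵇ ℝ := BoundedContinuousFunction.ofNormedAddCommGroup f
      continuous_of_discreteTopology 1 hf
    have h1 : Tendsto (fun n => (νseq n - ν) f') atTop (nhds 0) := by
      have := (hlim f').sub_const (ν f')
      rw [sub_self] at this
      exact this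
    simp only [hrep] at h1
    exact h1)
  refine squeeze_zero (fun n => ContinuousLinearMap.opNorm_nonneg _) (fun n => ?_) key
  refine ContinuousLinearMap.opNorm_le_bound _ (tsum_nonneg fun y => abs_nonneg _) (fun f => ?_)
  rw [hrep, ← tsum_mul_right]
  have hb : ∀ y, ‖(g n y - k y) * f y‖ ≤ |g n y - k y| * ‖f‖ := fun y => by
    rw [Real.norm_eq_abs, abs_mul]
    exact mul_le_mul_of_nonneg_left (f.norm_coe_le_norm y) (abs_nonneg _)
  exact tsum_of_norm_bounded ((hs n).mul_right ‖f‖).hasSum hb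

/-- Joint sequential weak* continuity of convolution on `ℓ¹`-representable functionals. -/
theorem stmt9 {X Y : Type*} [Semigroup X] [TopologicalSpace X] [DiscreteTopology X]
    [TopologicalSpace Y] [DiscreteTopology Y]
    (m : X × Y → Y) (hm : ∀ s s' : X, ∀ y : Y, m (s, m (s', y)) = m (s * s', y))
    (μseq : ℕ → StrongDual ℝ (X →ᵇ ℝ)) (μ : StrongDual ℝ (X →ᵇ ℝ))
    (νseq : ℕ → StrongDual ℝ (Y →ᵇ ℝ)) (ν : StrongDual ℝ (Y →ᵇ ℝ))
    (hμseq : ∀ n, L1Rep (μseq n)) (hμ : L1Rep μ)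
    (hνseq : ∀ n, L1Rep (νseq n)) (hν : L1Rep ν)
    (hμlim : Tendsto (fun n => StrongDual.toWeakDual (μseq n)) atTop (nhds (StrongDual.toWeakDual μ)))
    (hνlim : Tendsto (fun n => StrongDual.toWeakDual (νseq n)) atTop (nhds (StrongDual.toWeakDual ν))) :
    Tendsto (fun n => StrongDual.toWeakDual (convMap (fun x y => m (x, y)) (μseq n) (νseq n)))
      atTop (nhds (StrongDual.toWeakDual (convMap (fun x y => m (x, y)) μ ν))) := by
  have hμ' : ∀ f, Tendsto (fun n => μseq n f) atTop (nhds (μ f)) := fun f =>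
    (WeakBilin.tendsto_iff_forall_eval_tendsto _ ContinuousLinearMap.coe_injective).1 hμlim f
  have hν' : ∀ f, Tendsto (fun n => νseq n f) atTop (nhds (ν f)) := fun f =>
    (WeakBilin.tendsto_iff_forall_eval_tendsto _ ContinuousLinearMap.coe_injective).1 hνlim f
  refine (WeakBilin.tendsto_iff_forall_eval_tendsto _ ContinuousLinearMap.coe_injective).2 ?_
  intro f
  change Tendsto (fun n => μseq n (innerConv (fun x y => m (x, y)) (νseq n) f)) atTop
    (nhds (μ (innerConv (fun x y => m (x, y)) ν f)))
  have hnorm := L1Rep.tendsto_norm νseq ν hνseq hν hν'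
  obtain ⟨C, hC⟩ := banach_steinhaus (g := μseq) (fun f => by
    obtain ⟨C, hC⟩ := (hμ' f).norm.bddAbove_range
    exact ⟨C, fun n => hC ⟨n, rfl⟩⟩)
  have hdiff : ∀ n, innerConv (fun x y => m (x, y)) (νseq n) f =
      innerConv (fun x y => m (x, y)) (νseq n - ν) f + innerConv (fun x y => m (x, y)) ν f := by
    intro n
    ext x
    simp [innerConv]
  have h0 : Tendsto (fun n => μseq n (innerConv (fun x y => m (x, y)) (νseq n - ν) f)) atTop
      (nhds 0) := by
    refine squeeze_zero_norm (a := fun n => C * (‖νseq n - ν‖ * ‖f‖)) (fun n => ?_) ?_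
    · have hn : ‖innerConv (fun x y => m (x, y)) (νseq n - ν) f‖ ≤ ‖νseq n - ν‖ * ‖f‖ :=
        norm_ofNormedAddCommGroup_le _ (by positivity) _
      exact ((μseq n).le_opNorm _).trans
        (mul_le_mul (hC n) hn (norm_nonneg _) ((norm_nonneg _).trans (hC n)))
    · simpa using (hnorm.mul_const ‖f‖).const_mul C
  have h1 := h0.add (hμ' (innerConv (fun x y => m (x, y)) ν f))
  rw [zero_add] at h1
  refine h1.congr fun n => ?_
  rw [hdiff n, map_add]
end

section
/- Let X be a semigroup acting on a set Y (both discrete) via m : X × Y → Y with m(s, m(s', y)) = m(ss', y). Let μ₀ ∈ M(X) be positive and ℓ¹-representable, and let ν₀ ∈ M(Y) be positive. Then the mapping (μ, ν) ↦ μ⋆ν, restricted to the set of pairs of positive functionals in M(X) × M(Y) with the product of the weak* topologies, is jointly continuous at (μ₀, ν₀). -/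
open BoundedContinuousFunction NormedSpace

theorem PosFunc.mono' {X : Type*} [TopologicalSpace X] [DiscreteTopology X]
    {μ : StrongDual ℝ (X →ᵇ ℝ)} (hμ : PosFunc μ) {f g : X →ᵇ ℝ} (h : ∀ x, f x ≤ g x) :
    μ f ≤ μ g := by
  have := hμ (g - f) (fun x => by simpa using h x)
  rw [map_sub] at this
  linarith

theorem PosFunc.abs_le' {X : Type*} [TopologicalSpace X] [DiscreteTopology X]
    {μ : StrongDual ℝ (X →ᵇ ℝ)} (hμ : PosFunc μ) {f g : X →ᵇ ℝ} (h : ∀ x, |f x| ≤ g x) :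
    |μ f| ≤ μ g := by
  rw [abs_le]
  constructor
  · rw [← map_neg]
    exact hμ.mono' fun x => by simpa using (abs_le.1 (h x)).1
  · exact hμ.mono' fun x => (abs_le.1 (h x)).2

/-- indicator of the complement of a finite set -/
noncomputable def coInd {X : Type*} [TopologicalSpace X] [DiscreteTopology X]
    (S : Finset X) : X →ᵇ ℝ :=
  BoundedContinuousFunction.ofNormedAddCommGroup
    (Set.indicator {x | x ∉ S} (fun _ => (1 : ℝ)))
    continuous_of_discreteTopology 1
    (fun x => by
      classical
      by_cases h : x ∈ S <;> simp [Set.indicator, h])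

theorem coInd_apply {X : Type*} [TopologicalSpace X] [DiscreteTopology X]
    (S : Finset X) (x : X) : coInd S x = Set.indicator {x | x ∉ S} (fun _ => (1 : ℝ)) x := rfl

theorem tendsto_coInd {X : Type*} [TopologicalSpace X] [DiscreteTopology X]
    {μ : StrongDual ℝ (X →ᵇ ℝ)} (hμ : L1Rep μ) :
    Filter.Tendsto (fun S : Finset X => μ (coInd S)) Filter.atTop (nhds 0) := by
  obtain ⟨g, -, hg⟩ := hμ
  refine (tendsto_tsum_compl_atTop_zero g).congr fun S => ?_
  rw [hg]
  have := tsum_subtype {x | x ∉ S} g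
  refine Eq.trans this ?_
  refine tsum_congr fun x => ?_
  rw [coInd_apply]
  classical
  by_cases h : x ∈ S <;> simp [Set.indicator, h]

theorem inner_bound {X Y : Type*} [TopologicalSpace X] [DiscreteTopology X]
    [TopologicalSpace Y] [DiscreteTopology Y] (p : X → Y → Y) {ν : StrongDual ℝ (Y →ᵇ ℝ)}
    (hν : PosFunc ν) (f : Y →ᵇ ℝ) (x : X) : |innerConv p ν f x| ≤ ν 1 * ‖f‖ := by
  have h : |ν (f.compContinuous ⟨fun y => p x y, continuous_of_discreteTopology⟩)|
      ≤ ν (‖f‖ • (1 : Y →ᵇ ℝ)) :=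
    hν.abs_le' fun y => by
      simpa using f.norm_coe_le_norm (p x y)
  rw [map_smul, smul_eq_mul, mul_comm] at h
  exact h

theorem key_bound {X Y : Type*} [TopologicalSpace X] [DiscreteTopology X]
    [TopologicalSpace Y] [DiscreteTopology Y] (p : X → Y → Y)
    {μ μ₀ : StrongDual ℝ (X →ᵇ ℝ)} {ν ν₀ : StrongDual ℝ (Y →ᵇ ℝ)}
    (hμ : PosFunc μ) (hν : PosFunc ν) (hν₀ : PosFunc ν₀) (f : Y →ᵇ ℝ) (S : Finset X) :
    |convMap p μ ν f - convMap p μ₀ ν₀ f| ≤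
      |μ (innerConv p ν₀ f) - μ₀ (innerConv p ν₀ f)|
      + (∑ x ∈ S, |innerConv p ν f x - innerConv p ν₀ f x|) * μ 1
      + ((ν 1 + ν₀ 1) * ‖f‖) * μ (coInd S) := by
  have e : convMap p μ ν f - convMap p μ₀ ν₀ f =
      (μ (innerConv p ν₀ f) - μ₀ (innerConv p ν₀ f)) +
        μ (innerConv p ν f - innerConv p ν₀ f) := by
    rw [map_sub]
    change μ (innerConv p ν f) - μ₀ (innerConv p ν₀ f) = _
    ring
  have h : |μ (innerConv p ν f - innerConv p ν₀ f)| ≤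
      μ ((∑ x ∈ S, |innerConv p ν f x - innerConv p ν₀ f x|) • (1 : X →ᵇ ℝ)
        + ((ν 1 + ν₀ 1) * ‖f‖) • coInd S) := by
    refine hμ.abs_le' fun x => ?_
    have hb := inner_bound p hν f x
    have hb₀ := inner_bound p hν₀ f x
    have hs : 0 ≤ ∑ x ∈ S, |innerConv p ν f x - innerConv p ν₀ f x| :=
      Finset.sum_nonneg fun _ _ => abs_nonneg _
    simp only [coe_sub, Pi.sub_apply, coe_add, Pi.add_apply, coe_smul, smul_eq_mul, coe_one,
      Pi.one_apply, mul_one, coInd_apply]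
    by_cases hx : x ∈ S
    · have := Finset.single_le_sum (f := fun x => |innerConv p ν f x - innerConv p ν₀ f x|)
        (fun _ _ => abs_nonneg _) hx
      simpa [Set.indicator, hx] using this
    · have := abs_sub (innerConv p ν f x) (innerConv p ν₀ f x)
      simp only [Set.indicator, Set.mem_setOf_eq, hx, not_false_eq_true, if_true, mul_one]
      linarith
  rw [map_add, map_smul, map_smul, smul_eq_mul, smul_eq_mul] at h
  rw [e]
  exact (abs_add_le _ _).trans (by linarith)

/-- Joint weak* continuity of convolution at a pair of positive functionals, the first of
which is `ℓ¹`-representable, within the set of pairs of positive functionals. -/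
theorem stmt10 {X Y : Type*} [Semigroup X] [TopologicalSpace X] [DiscreteTopology X]
    [TopologicalSpace Y] [DiscreteTopology Y]
    (m : X × Y → Y) (hm : ∀ s s' : X, ∀ y : Y, m (s, m (s', y)) = m (s * s', y))
    (μ₀ : StrongDual ℝ (X →ᵇ ℝ)) (ν₀ : StrongDual ℝ (Y →ᵇ ℝ))
    (hμ₀pos : PosFunc μ₀) (hμ₀ : L1Rep μ₀) (hν₀pos : PosFunc ν₀) :
    ContinuousWithinAt
      (fun q : WeakDual ℝ (X →ᵇ ℝ) × WeakDual ℝ (Y →ᵇ ℝ) =>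
        StrongDual.toWeakDual (convMap (fun x y => m (x, y))
          (WeakDual.toStrongDual q.1) (WeakDual.toStrongDual q.2)))
      {q : WeakDual ℝ (X →ᵇ ℝ) × WeakDual ℝ (Y →ᵇ ℝ) |
        PosFunc (WeakDual.toStrongDual q.1) ∧ PosFunc (WeakDual.toStrongDual q.2)}
      (StrongDual.toWeakDual μ₀, StrongDual.toWeakDual ν₀) := by
  rw [ContinuousWithinAt, tendsto_iff_forall_eval_tendsto_topDualPairing]
  intro f
  set p : X → Y → Y := fun x y => m (x, y) with hp
  set L := nhdsWithin (StrongDual.toWeakDual μ₀, StrongDual.toWeakDual ν₀)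
    {q : WeakDual ℝ (X →ᵇ ℝ) × WeakDual ℝ (Y →ᵇ ℝ) |
        PosFunc (WeakDual.toStrongDual q.1) ∧ PosFunc (WeakDual.toStrongDual q.2)} with hL
  change Filter.Tendsto (fun q : WeakDual ℝ (X →ᵇ ℝ) × WeakDual ℝ (Y →ᵇ ℝ) =>
    convMap p (WeakDual.toStrongDual q.1) (WeakDual.toStrongDual q.2) f) L
    (nhds (convMap p μ₀ ν₀ f))
  have h1 : ∀ k : X →ᵇ ℝ, Filter.Tendsto (fun q : WeakDual ℝ (X →ᵇ ℝ) × WeakDual ℝ (Y →ᵇ ℝ) =>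
      WeakDual.toStrongDual q.1 k) L (nhds (μ₀ k)) := fun k =>
    (((WeakDual.eval_continuous k).comp continuous_fst).tendsto
      (StrongDual.toWeakDual μ₀, StrongDual.toWeakDual ν₀)).mono_left nhdsWithin_le_nhds
  have h2 : ∀ k : Y →ᵇ ℝ, Filter.Tendsto (fun q : WeakDual ℝ (X →ᵇ ℝ) × WeakDual ℝ (Y →ᵇ ℝ) =>
      WeakDual.toStrongDual q.2 k) L (nhds (ν₀ k)) := fun k =>
    (((WeakDual.eval_continuous k).comp continuous_snd).tendsto
      (StrongDual.toWeakDual μ₀, StrongDual.toWeakDual ν₀)).mono_left nhdsWithin_le_nhds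
  have h3 : ∀ x : X, Filter.Tendsto (fun q : WeakDual ℝ (X →ᵇ ℝ) × WeakDual ℝ (Y →ᵇ ℝ) =>
      innerConv p (WeakDual.toStrongDual q.2) f x) L (nhds (innerConv p ν₀ f x)) := fun x =>
    h2 _
  rw [Metric.tendsto_nhds]
  intro ε hε
  have hS : Filter.Tendsto (fun S : Finset X => ((ν₀ 1 + ν₀ 1) * ‖f‖) * μ₀ (coInd S))
      Filter.atTop (nhds 0) := by
    simpa using (tendsto_coInd hμ₀).const_mul ((ν₀ 1 + ν₀ 1) * ‖f‖)
  obtain ⟨S, hSε⟩ := (hS.eventually (gt_mem_nhds hε)).exists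
  have hB := ((((h1 (innerConv p ν₀ f)).sub_const (μ₀ (innerConv p ν₀ f))).abs).add
    ((tendsto_finsetSum S fun x _ =>
      ((h3 x).sub_const (innerConv p ν₀ f x)).abs).mul (h1 1))).add
    ((((h2 1).add_const (ν₀ 1)).mul_const ‖f‖).mul (h1 (coInd S)))
  simp only [sub_self, abs_zero, Finset.sum_const_zero, zero_mul, zero_add] at hB
  filter_upwards [hB.eventually (gt_mem_nhds hSε), self_mem_nhdsWithin] with q hq hpos
  rw [Real.dist_eq]
  exact (key_bound p hpos.1 hpos.2 hν₀pos f S).trans_lt hq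
end

section
/- Let X be a semigroup with the discrete topology and let f ∈ U_b(X). Define φ(ν) = (x ↦ ν(y ↦ f(xy))) for ν ∈ K. Then (i) φ is continuous from K (with the weak* topology) to the product space ℝ^X, and (ii) the image φ(K) equals the closure in ℝ^X of the right orbit of f. -/
open BoundedContinuousFunction NormedSpace

/-- The map `φ(ν) = (x ↦ ν (y ↦ f (x y)))` is continuous from the uniform compactification
`K` (the weak* closure of the evaluation functionals) to `ℝ^X`, and its image is the
pointwise closure of the right orbit of `f`. -/
theorem stmt11 {X : Type*} [Semigroup X] [TopologicalSpace X] [DiscreteTopology X]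
    (f : X →ᵇ ℝ) :
    ContinuousOn
      (fun ν : WeakDual ℝ (X →ᵇ ℝ) => fun x : X =>
        ν (f.compContinuous ⟨fun y => x * y, continuous_of_discreteTopology⟩))
      (closure (Set.range fun x : X => StrongDual.toWeakDual (evalCLM ℝ x))) ∧
    (fun ν : WeakDual ℝ (X →ᵇ ℝ) => fun x : X =>
        ν (f.compContinuous ⟨fun y => x * y, continuous_of_discreteTopology⟩)) ''
      (closure (Set.range fun x : X => StrongDual.toWeakDual (evalCLM ℝ x))) =
      closure (Set.range fun x : X => fun z : X => f (z * x)) := by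
  have hc : Continuous (fun ν : WeakDual ℝ (X →ᵇ ℝ) => fun x : X =>
        ν (f.compContinuous ⟨fun y => x * y, continuous_of_discreteTopology⟩)) :=
    continuous_pi fun x => WeakDual.eval_continuous _
  refine ⟨hc.continuousOn, ?_⟩
  have hsub : closure (Set.range fun x : X => StrongDual.toWeakDual (evalCLM ℝ x)) ⊆
      (WeakDual.toStrongDual ⁻¹' Metric.closedBall (0 : StrongDual ℝ (X →ᵇ ℝ)) 1) := by
    refine closure_minimal ?_ (WeakDual.isClosed_closedBall 0 1)
    rintro _ ⟨x, rfl⟩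
    have h : ‖(evalCLM ℝ x : StrongDual ℝ (X →ᵇ ℝ))‖ ≤ 1 :=
      ContinuousLinearMap.opNorm_le_bound _ zero_le_one fun g => by
        rw [one_mul]
        exact g.norm_coe_le_norm x
    have h2 : (evalCLM ℝ x : StrongDual ℝ (X →ᵇ ℝ)) ∈
        Metric.closedBall (0 : StrongDual ℝ (X →ᵇ ℝ)) 1 := by
      exact (mem_closedBall_zero_iff (E := StrongDual ℝ (X →ᵇ ℝ))).2 h
    exact h2
  have hK : IsCompact (closure (Set.range fun x : X =>
      (StrongDual.toWeakDual (evalCLM ℝ x) : WeakDual ℝ (X →ᵇ ℝ)))) :=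
    (WeakDual.isCompact_closedBall 0 1).of_isClosed_subset isClosed_closure hsub
  rw [image_closure_of_isCompact hK hc.continuousOn, ← Set.range_comp]
  rfl
end

section
/- Let X be a semigroup with the discrete topology, μ ∈ M(X) and f ∈ U_b(X). If the mapping ν ↦ μ⋆ν from K (with the weak* topology) to M(X) (with the weak* topology) is continuous, then the map g ↦ μ(g) is continuous on the closure of the right orbit of f, where that closure carries the topology of pointwise convergence (every element of this closure is a bounded function on X, hence lies in U_b(X)). -/
open BoundedContinuousFunction NormedSpace

/-- Apply a functional to a plain function, when it is (the coercion of) a bounded function. -/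
noncomputable def applyDual {X : Type*} [TopologicalSpace X] [DiscreteTopology X]
    (mu : StrongDual ℝ (X →ᵇ ℝ)) (g : X → ℝ) : ℝ :=
  letI := Classical.propDecidable (∃ f : X →ᵇ ℝ, ⇑f = g)
  if h : ∃ f : X →ᵇ ℝ, ⇑f = g then mu h.choose else 0

/-- If `ν ↦ μ ⋆ ν` is weak* continuous on the uniform compactification `K`, then `μ` is
continuous on the pointwise closure of the right orbit of any `f ∈ U_b(X)`. -/
theorem stmt12 {X : Type*} [Semigroup X] [TopologicalSpace X] [DiscreteTopology X]
    (μ : StrongDual ℝ (X →ᵇ ℝ)) (f : X →ᵇ ℝ)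
    (hcont : ContinuousOn
      (fun ν : WeakDual ℝ (X →ᵇ ℝ) =>
        StrongDual.toWeakDual (convMap (· * ·) μ (WeakDual.toStrongDual ν)))
      (closure (Set.range fun x : X => StrongDual.toWeakDual (evalCLM ℝ x)))) :
    ContinuousOn (applyDual μ) (closure (Set.range fun x : X => fun z : X => f (z * x))) := by
  set K := closure (Set.range fun x : X =>
    (StrongDual.toWeakDual (evalCLM ℝ x) : WeakDual ℝ (X →ᵇ ℝ))) with hK
  have hKc : IsCompact K := by
    have hb := WeakDual.isCompact_closedBall (𝕜 := ℝ) (E := X →ᵇ ℝ) 0 1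
    refine hb.of_isClosed_subset isClosed_closure (closure_minimal ?_ hb.isClosed)
    rintro _ ⟨x, rfl⟩
    have : ‖(evalCLM ℝ x : StrongDual ℝ (X →ᵇ ℝ))‖ ≤ 1 :=
      ContinuousLinearMap.opNorm_le_bound _ zero_le_one
        (fun g => by simpa using g.norm_coe_le_norm x)
    simpa using this
  let Φ : WeakDual ℝ (X →ᵇ ℝ) → X → ℝ := fun ν => innerConv (· * ·) (WeakDual.toStrongDual ν) f
  have hΦ : Continuous Φ := by
    refine continuous_pi fun z => ?_
    exact WeakDual.eval_continuous
      (f.compContinuous ⟨fun y => z * y, continuous_of_discreteTopology⟩)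
  have happ : ∀ g : X →ᵇ ℝ, applyDual μ (⇑g) = μ g := by
    intro g
    have h : ∃ f : X →ᵇ ℝ, ⇑f = ⇑g := ⟨g, rfl⟩
    unfold applyDual
    rw [dif_pos h]
    exact congrArg μ (DFunLike.coe_injective h.choose_spec)
  have hcomp : ContinuousOn (fun ν => applyDual μ (Φ ν)) K := by
    have h2 := (WeakDual.eval_continuous (𝕜 := ℝ) f).comp_continuousOn hcont
    refine h2.congr fun ν _ => ?_
    exact happ _
  have hsub : closure (Set.range fun x : X => fun z : X => f (z * x)) ⊆ Φ '' K := by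
    refine closure_minimal ?_ (hKc.image hΦ).isClosed
    rintro _ ⟨x, rfl⟩
    exact ⟨_, subset_closure ⟨x, rfl⟩, rfl⟩
  refine ContinuousOn.mono ?_ hsub
  rw [continuousOn_iff_isClosed]
  intro t ht
  obtain ⟨u, hu, hut⟩ := continuousOn_iff_isClosed.1 hcomp t ht
  refine ⟨Φ '' (u ∩ K), ((hKc.inter_left hu).image hΦ).isClosed, ?_⟩
  rw [← hut]
  ext g
  constructor
  · rintro ⟨hg, ν, hν, rfl⟩
    exact ⟨⟨ν, ⟨hg, hν⟩, rfl⟩, ν, hν, rfl⟩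
  · rintro ⟨⟨ν, ⟨hg, hν⟩, rfl⟩, _⟩
    exact ⟨hg, ν, hν, rfl⟩
end

section
/- Let X be a semigroup with the discrete topology. If μ, ν ∈ K, then μ⋆ν ∈ K; that is, the weak* closure K of the evaluation functionals is closed under convolution. -/
open BoundedContinuousFunction NormedSpace

/-- The uniform compactification `K` is closed under convolution. -/
theorem stmt14 {X : Type*} [Semigroup X] [TopologicalSpace X] [DiscreteTopology X]
    (μ ν : WeakDual ℝ (X →ᵇ ℝ))
    (hμ : μ ∈ closure (Set.range fun x : X => StrongDual.toWeakDual (evalCLM ℝ x)))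
    (hν : ν ∈ closure (Set.range fun x : X => StrongDual.toWeakDual (evalCLM ℝ x))) :
    StrongDual.toWeakDual (convMap (· * ·) (WeakDual.toStrongDual μ) (WeakDual.toStrongDual ν)) ∈
      closure (Set.range fun x : X => StrongDual.toWeakDual (evalCLM ℝ x)) := by
  rw [← closure_closure]
  refine map_mem_closure
    (f := fun m : WeakDual ℝ (X →ᵇ ℝ) => StrongDual.toWeakDual
      (convMap (· * ·) (WeakDual.toStrongDual m) (WeakDual.toStrongDual ν))) ?_ hμ ?_
  · refine WeakDual.continuous_of_continuous_eval fun f => ?_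
    exact WeakDual.eval_continuous (innerConv (· * ·) (WeakDual.toStrongDual ν) f)
  · rintro _ ⟨x, rfl⟩
    refine map_mem_closure
      (f := fun n : WeakDual ℝ (X →ᵇ ℝ) => StrongDual.toWeakDual
        (convMap (· * ·) (evalCLM ℝ x) (WeakDual.toStrongDual n))) ?_ hν ?_
    · refine WeakDual.continuous_of_continuous_eval fun f => ?_
      exact WeakDual.eval_continuous
        (f.compContinuous ⟨fun y => x * y, continuous_of_discreteTopology⟩)
    · rintro _ ⟨y, rfl⟩
      exact ⟨x * y, rfl⟩
end
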